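/- Let y ∈ ℂ with Re(y) > 0. Then Σ_{n=1}^∞ log(n)/(e^{ny} − 1) = −(1/4)log(2π) + log²(y)/(2y) − γ²/(2y) + π²/(12y) − (2/y)(γ + log(y)) Σ_{n=1}^∞ { log(2πn/y) − (1/2)(ψ(2πin/y) + ψ(−2πin/y)) } + (1/y) Σ_{n=1}^∞ { ψ₁(2πin/y) + ψ₁(−2πin/y) − (1/2)(log²(2πin/y) + log²(−2πin/y)) + y/(4n) }, where both series on the right converge. -/

import Mathlib

open Filter Topology MeasureTheory

noncomputable def eulerGamma : ℝ := Real.eulerMascheroniConstant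

noncomputable def gamma1 : ℝ :=
  limUnder atTop (fun n : ℕ => ∑ j ∈ Finset.Icc 1 n, Real.log j / j - (Real.log n) ^ 2 / 2)

noncomputable def psi1 (z : ℂ) : ℂ :=
  -(gamma1 : ℂ) - Complex.log z / z -
    ∑' n : ℕ, (Complex.log (((n : ℂ) + 1) + z) / (((n : ℂ) + 1) + z)
      - Complex.log ((n : ℂ) + 1) / ((n : ℂ) + 1))

noncomputable def digamma (z : ℂ) : ℂ :=
  -(eulerGamma : ℂ) - 1 / z + ∑' n : ℕ, (1 / ((n : ℂ) + 1) - 1 / (((n : ℂ) + 1) + z))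

noncomputable def wigTerm (y : ℂ) (n : ℕ) : ℂ :=
  Complex.log (2 * (Real.pi : ℂ) * ((n : ℂ) + 1) / y)
    - (1/2) * (digamma (2 * (Real.pi : ℂ) * Complex.I * ((n : ℂ) + 1) / y)
      + digamma (-(2 * (Real.pi : ℂ) * Complex.I * ((n : ℂ) + 1) / y)))

noncomputable def psiTerm (y : ℂ) (n : ℕ) : ℂ :=
  psi1 (2 * (Real.pi : ℂ) * Complex.I * ((n : ℂ) + 1) / y)
    + psi1 (-(2 * (Real.pi : ℂ) * Complex.I * ((n : ℂ) + 1) / y))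
    - (1/2) * ((Complex.log (2 * (Real.pi : ℂ) * Complex.I * ((n : ℂ) + 1) / y)) ^ 2
      + (Complex.log (-(2 * (Real.pi : ℂ) * Complex.I * ((n : ℂ) + 1) / y))) ^ 2)
    + y / (4 * ((n : ℂ) + 1))



noncomputable def trapW (u : ℝ) : ℝ := (1/2) * (Int.fract u * (1 - Int.fract u))

lemma trapW_nonneg (u : ℝ) : 0 ≤ trapW u := by
  unfold trapW
  have h1 := Int.fract_nonneg u
  have h2 := (Int.fract_lt_one u).le
  have := mul_nonneg h1 (sub_nonneg.2 h2)
  linarith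

lemma trapW_le (u : ℝ) : trapW u ≤ 1 := by
  unfold trapW
  have h1 := Int.fract_nonneg u
  have h2 := (Int.fract_lt_one u).le
  nlinarith

lemma trapW_measurable : Measurable trapW := by
  unfold trapW
  exact (measurable_fract.mul (measurable_const.sub measurable_fract)).const_mul _

lemma trapW_norm_le (u : ℝ) : ‖((trapW u : ℝ) : ℂ)‖ ≤ 1 := by
  rw [Complex.norm_real, Real.norm_eq_abs, abs_of_nonneg (trapW_nonneg u)]
  exact trapW_le u

lemma trapW_norm_mul_le (u : ℝ) (c : ℂ) : ‖(trapW u : ℂ) * c‖ ≤ ‖c‖ := by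
  rw [norm_mul]
  exact mul_le_of_le_one_left (norm_nonneg _) (trapW_norm_le u)

lemma trapW_eq (k : ℕ) (u : ℝ) (h1 : (k:ℝ) ≤ u) (h2 : u < k + 1) :
    trapW u = (1/2) * ((u - k) * (1 - (u - k))) := by
  have : Int.fract u = u - k := by
    rw [Int.fract_eq_iff]
    refine ⟨by linarith, by linarith, k, by simp⟩
  rw [trapW, this]

lemma trap_unit (f f' f'' : ℝ → ℂ) (k : ℕ)
    (h1 : ∀ u ∈ Set.Icc (k:ℝ) (k+1), HasDerivAt f (f' u) u)
    (h2 : ∀ u ∈ Set.Icc (k:ℝ) (k+1), HasDerivAt f' (f'' u) u)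
    (h3 : ContinuousOn f'' (Set.Icc (k:ℝ) (k+1))) :
    ∫ u in (k:ℝ)..(k+1), (trapW u : ℂ) * f'' u =
      (1/2) * (f k + f (k+1)) - ∫ u in (k:ℝ)..(k+1), f u := by
  have hle : (k:ℝ) ≤ k + 1 := by linarith
  have hfc : ContinuousOn f (Set.Icc (k:ℝ) (k+1)) := fun u hu => (h1 u hu).continuousAt.continuousWithinAt
  have e1 : ∫ u in (k:ℝ)..(k+1), (trapW u : ℂ) * f'' u =
      ∫ u in (k:ℝ)..(k+1), (((1/2) * ((u - k) * (1 - (u - k))) : ℝ) : ℂ) * f'' u := by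
    apply intervalIntegral.integral_congr_ae
    have : ∀ᵐ u : ℝ, u ≠ (k:ℝ) + 1 := by
      simp [ae_iff, measure_singleton]
    filter_upwards [this] with u hu hmem
    rw [Set.uIoc_of_le hle] at hmem
    rw [trapW_eq k u hmem.1.le (lt_of_le_of_ne hmem.2 hu)]
  have hw : Continuous fun u : ℝ => (((1/2) * ((u - k) * (1 - (u - k))) : ℝ) : ℂ) := by fun_prop
  have i1 : IntervalIntegrable (fun u => (((1/2) * ((u - k) * (1 - (u - k))) : ℝ) : ℂ) * f'' u) volume k (k+1) := by
    apply ContinuousOn.intervalIntegrable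
    rw [Set.uIcc_of_le hle]
    exact hw.continuousOn.mul h3
  have i2 : IntervalIntegrable f volume (k:ℝ) (k+1) := by
    apply ContinuousOn.intervalIntegrable
    rwa [Set.uIcc_of_le hle]
  rw [e1, eq_sub_iff_add_eq, ← intervalIntegral.integral_add i1 i2]
  have hd : ∀ u ∈ Set.uIcc (k:ℝ) (k+1), HasDerivAt
      (fun u : ℝ => (((1/2) * ((u - k) * (1 - (u - k))) : ℝ) : ℂ) * f' u
        - ((1/2 - (u - k) : ℝ) : ℂ) * f u)
      ((((1/2) * ((u - k) * (1 - (u - k))) : ℝ) : ℂ) * f'' u + f u) u := by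
    intro u hu
    rw [Set.uIcc_of_le hle] at hu
    have a1 : HasDerivAt (fun u : ℝ => (((1/2) * ((u - k) * (1 - (u - k))) : ℝ) : ℂ))
        ((1/2 - (u-k) : ℝ) : ℂ) u := by
      apply HasDerivAt.ofReal_comp
      have b1 : HasDerivAt (fun u : ℝ => u - k) 1 u := (hasDerivAt_id u).sub_const _
      have := (b1.mul (b1.const_sub 1)).const_mul (1/2:ℝ)
      exact this.congr_deriv (by ring)
    have a2 : HasDerivAt (fun u : ℝ => ((1/2 - (u - k) : ℝ) : ℂ)) ((-1 : ℝ) : ℂ) u := by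
      apply HasDerivAt.ofReal_comp
      have b1 : HasDerivAt (fun u : ℝ => u - k) 1 u := (hasDerivAt_id u).sub_const _
      exact b1.const_sub (1/2)
    have := (a1.mul (h2 u hu)).sub (a2.mul (h1 u hu))
    refine this.congr_deriv ?_
    push_cast
    ring
  rw [intervalIntegral.integral_eq_sub_of_hasDerivAt hd (i1.add i2)]
  push_cast
  ring

lemma trap_sum (f f' f'' : ℝ → ℂ) (a : ℕ)
    (h1 : ∀ u : ℝ, (a:ℝ) ≤ u → HasDerivAt f (f' u) u)
    (h2 : ∀ u : ℝ, (a:ℝ) ≤ u → HasDerivAt f' (f'' u) u)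
    (h3 : ContinuousOn f'' (Set.Ici (a:ℝ))) (n : ℕ) :
    ∫ u in (a:ℝ)..((a + n : ℕ):ℝ), (trapW u : ℂ) * f'' u =
      ∑ k ∈ Finset.range n, (1/2) * (f ((a + k : ℕ):ℝ) + f (((a + k : ℕ):ℝ)+1))
        - ∫ u in (a:ℝ)..((a+n : ℕ):ℝ), f u := by
  have hi2 : ∀ x y : ℝ, (a:ℝ) ≤ x → x ≤ y → IntervalIntegrable f'' volume x y := by
    intro x y hx hxy
    apply ContinuousOn.intervalIntegrable
    rw [Set.uIcc_of_le hxy]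
    exact h3.mono fun t ht => hx.trans ht.1
  have hiw : ∀ x y : ℝ, (a:ℝ) ≤ x → x ≤ y →
      IntervalIntegrable (fun u => (trapW u : ℂ) * f'' u) volume x y := by
    intro x y hx hxy
    refine (hi2 x y hx hxy).mono_fun ?_ ?_
    · exact (Complex.measurable_ofReal.comp trapW_measurable).aestronglyMeasurable.mul
        (intervalIntegrable_iff.1 (hi2 x y hx hxy)).aestronglyMeasurable
    · exact Filter.Eventually.of_forall fun u => trapW_norm_mul_le u _
  have hi : ∀ x y : ℝ, (a:ℝ) ≤ x → x ≤ y → IntervalIntegrable f volume x y := by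
    intro x y hx hxy
    apply ContinuousOn.intervalIntegrable
    rw [Set.uIcc_of_le hxy]
    exact fun u hu => (h1 u (hx.trans hu.1)).continuousAt.continuousWithinAt
  induction n with
  | zero => simp
  | succ n ih =>
    have ha : (a:ℝ) ≤ ((a+n:ℕ):ℝ) := by exact_mod_cast Nat.le_add_right a n
    have hb : ((a+n:ℕ):ℝ) ≤ ((a+(n+1):ℕ):ℝ) := by push_cast; linarith
    rw [← intervalIntegral.integral_add_adjacent_intervals (hiw _ _ le_rfl ha) (hiw _ _ ha hb),
      ← intervalIntegral.integral_add_adjacent_intervals (hi _ _ le_rfl ha) (hi _ _ ha hb), ih,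
      Finset.sum_range_succ]
    have e : ((a+(n+1):ℕ):ℝ) = ((a+n:ℕ):ℝ) + 1 := by push_cast; ring
    rw [e, trap_unit f f' f'' (a+n) (fun u hu => h1 u (ha.trans hu.1))
      (fun u hu => h2 u (ha.trans hu.1)) (h3.mono fun t ht => ha.trans ht.1)]
    ring

lemma trap_tendsto (f f' f'' : ℝ → ℂ) (a : ℕ)
    (h1 : ∀ u : ℝ, (a:ℝ) ≤ u → HasDerivAt f (f' u) u)
    (h2 : ∀ u : ℝ, (a:ℝ) ≤ u → HasDerivAt f' (f'' u) u)
    (h3 : ContinuousOn f'' (Set.Ici (a:ℝ)))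
    (h4 : IntegrableOn f'' (Set.Ioi (a:ℝ))) :
    Tendsto (fun n : ℕ => ∑ k ∈ Finset.range n, (1/2) * (f ((a + k : ℕ):ℝ) + f (((a + k : ℕ):ℝ)+1))
        - ∫ u in (a:ℝ)..((a+n : ℕ):ℝ), f u) atTop
      (𝓝 (∫ u in Set.Ioi (a:ℝ), (trapW u : ℂ) * f'' u)) := by
  simp_rw [← trap_sum f f' f'' a h1 h2 h3]
  apply intervalIntegral_tendsto_integral_Ioi
  · refine Integrable.mono h4 ?_ ?_
    · exact (Complex.measurable_ofReal.comp trapW_measurable).aestronglyMeasurable.mul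
        h4.aestronglyMeasurable
    · exact Filter.Eventually.of_forall fun u => trapW_norm_mul_le u _
  · have : Tendsto (fun i : ℕ => a + i) atTop atTop :=
      tendsto_atTop_mono (fun n => Nat.le_add_left n a) tendsto_id
    exact tendsto_natCast_atTop_atTop.comp this

lemma trap_sum_form (f : ℝ → ℂ) (a n : ℕ) :
    ∑ k ∈ Finset.range n, (1/2) * (f ((a + k : ℕ):ℝ) + f (((a + k : ℕ):ℝ)+1)) =
      (1/2) * f a + ∑ k ∈ Finset.range n, f ((a + k + 1 : ℕ) : ℝ) - (1/2) * f ((a+n:ℕ):ℝ) := by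
  induction n with
  | zero => simp
  | succ n ih =>
    rw [Finset.sum_range_succ, Finset.sum_range_succ, ih]
    have e : ((a+(n+1):ℕ):ℝ) = ((a+n:ℕ):ℝ) + 1 := by push_cast; ring
    have e' : ((a+n+1:ℕ):ℝ) = ((a+n:ℕ):ℝ) + 1 := by push_cast; ring
    rw [e, e']
    ring


lemma log_norm_bound (δ : ℝ) (hδ : 0 < δ) : ∃ C : ℝ, 0 ≤ C ∧ ∀ s : ℂ, δ ≤ ‖s‖ →
    1 ≤ C * ‖s‖ ^ (1/2 : ℝ) ∧ ‖Complex.log s‖ ≤ C * ‖s‖ ^ (1/2:ℝ) := by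
  have hp : 0 < δ ^ (1/2:ℝ) := Real.rpow_pos_of_pos hδ _
  refine ⟨2 + (1 + |Real.log δ| + Real.pi) * (δ ^ (1/2:ℝ))⁻¹, by positivity, ?_⟩
  intro s hs
  have hs0 : 0 < ‖s‖ := hδ.trans_le hs
  have hq : 0 < ‖s‖ ^ (1/2:ℝ) := Real.rpow_pos_of_pos hs0 _
  have h1 : 1 ≤ (δ ^ (1/2:ℝ))⁻¹ * ‖s‖ ^ (1/2:ℝ) := by
    rw [inv_mul_eq_div, one_le_div hp]
    exact Real.rpow_le_rpow hδ.le hs (by norm_num)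
  have hpi := Real.pi_pos
  have h3 : |Real.log ‖s‖| ≤ 2 * ‖s‖ ^ (1/2:ℝ) + |Real.log δ| := by
    rcases le_total 1 ‖s‖ with h | h
    · rw [abs_of_nonneg (Real.log_nonneg h)]
      have := Real.log_le_rpow_div hs0.le (by norm_num : (0:ℝ) < 1/2)
      have h4 := abs_nonneg (Real.log δ)
      linarith
    · rw [abs_of_nonpos (Real.log_nonpos hs0.le h)]
      have := Real.log_le_log hδ hs
      have h4 := neg_abs_le (Real.log δ)
      have : |Real.log δ| = - Real.log δ := abs_of_nonpos (Real.log_nonpos hδ.le (hs.trans h))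
      linarith
  have h2 : ‖Complex.log s‖ ≤ |Real.log ‖s‖| + Real.pi := by
    calc ‖Complex.log s‖ ≤ |(Complex.log s).re| + |(Complex.log s).im| := Complex.norm_le_abs_re_add_abs_im _
      _ ≤ _ := by
        rw [Complex.log_re, Complex.log_im]
        gcongr
        exact Complex.abs_arg_le_pi s
  have h5 := mul_le_mul_of_nonneg_left h1 (abs_nonneg (Real.log δ))
  have h6 := mul_le_mul_of_nonneg_left h1 hpi.le
  have h7 : 0 ≤ |Real.log δ| * ((δ ^ (1/2:ℝ))⁻¹ * ‖s‖ ^ (1/2:ℝ)) := by positivity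
  have h8 : 0 ≤ Real.pi * ((δ ^ (1/2:ℝ))⁻¹ * ‖s‖ ^ (1/2:ℝ)) := by positivity
  constructor <;> nlinarith

lemma pow_bound_aux (s : ℂ) (hs : 0 < ‖s‖) (A C : ℝ) (b : ℂ) (n : ℕ) (hb : ‖b‖ ≤ C * ‖s‖ ^ (1/2:ℝ))
    (hA : A = n - 1/2) : ‖b / s ^ n‖ ≤ C * ‖s‖ ^ (-A) := by
  rw [norm_div, norm_pow, div_le_iff₀ (by positivity), mul_assoc, ← Real.rpow_natCast,
    ← Real.rpow_add hs]
  have : -A + n = 1/2 := by rw [hA]; ring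
  rw [this]
  exact hb

noncomputable def gOne (s : ℂ) : ℂ := 2 / s ^ 3
noncomputable def gTwo (s : ℂ) : ℂ := (2 * Complex.log s - 3) / s ^ 3

lemma g_bounds (δ : ℝ) (hδ : 0 < δ) : ∃ C : ℝ, 0 ≤ C ∧ ∀ s : ℂ, δ ≤ ‖s‖ →
    ‖gOne s‖ ≤ C * ‖s‖ ^ (-(5/2) : ℝ) ∧ ‖gTwo s‖ ≤ C * ‖s‖ ^ (-(5/2) : ℝ) ∧
    ‖(1 - Complex.log s) / s ^ 2‖ ≤ C * ‖s‖ ^ (-(3/2) : ℝ) ∧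
    ‖(-1) / s ^ 2‖ ≤ C * ‖s‖ ^ (-(3/2) : ℝ) ∧
    ‖Complex.log s / s ^ 1‖ ≤ C * ‖s‖ ^ (-(1/2) : ℝ) ∧
    ‖1 / s ^ 1‖ ≤ C * ‖s‖ ^ (-(1/2) : ℝ) := by
  obtain ⟨C, hC, h⟩ := log_norm_bound δ hδ
  refine ⟨5 * C, by positivity, ?_⟩
  intro s hs
  obtain ⟨h1, h2⟩ := h s hs
  have hs0 : 0 < ‖s‖ := hδ.trans_le hs
  have t1 : ‖2 * Complex.log s - 3‖ ≤ 2 * ‖Complex.log s‖ + 3 := by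
    refine (norm_sub_le _ _).trans ?_
    simp
  have t2 : ‖1 - Complex.log s‖ ≤ 1 + ‖Complex.log s‖ := by
    refine (norm_sub_le _ _).trans ?_
    simp
  refine ⟨?_, ?_, ?_, ?_, ?_, ?_⟩
  · exact pow_bound_aux s hs0 _ _ _ _ (by simp; linarith) (by norm_num)
  · exact pow_bound_aux s hs0 _ _ _ _ (by linarith) (by norm_num)
  · exact pow_bound_aux s hs0 _ _ _ _ (by linarith) (by norm_num)
  · exact pow_bound_aux s hs0 _ _ _ _ (by simp; linarith) (by norm_num)
  · exact pow_bound_aux s hs0 _ _ _ _ (by linarith) (by norm_num)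
  · exact pow_bound_aux s hs0 _ _ _ _ (by simp; linarith) (by norm_num)

lemma mvt_bound (f f' : ℂ → ℂ) (C a : ℝ) (hC : 0 ≤ C) (ha : 0 ≤ a)
    (hd : ∀ s : ℂ, 0 < s.re → HasDerivAt f (f' s) s)
    (hb : ∀ s : ℂ, 1 ≤ ‖s‖ → ‖f' s‖ ≤ C * ‖s‖ ^ (-a)) (z : ℂ) (k : ℝ) (hk : 2 * ‖z‖ + 2 ≤ k) :
    ‖f (k + z) - f k‖ ≤ C * (k/2) ^ (-a) * ‖z‖ := by
  have hz := norm_nonneg z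
  have key : ∀ s ∈ Metric.closedBall (k:ℂ) ‖z‖, k/2 ≤ ‖s‖ ∧ 0 < s.re := by
    intro s hs
    rw [mem_closedBall_iff_norm] at hs
    have h1 : k - ‖z‖ ≤ s.re := by
      have := (Complex.abs_re_le_norm (s - k)).trans hs
      have := (abs_le.1 this).1
      simp at this
      linarith
    have := Complex.re_le_norm s
    constructor <;> linarith
  have := Convex.norm_image_sub_le_of_norm_hasDerivWithin_le (f := f) (f' := f')
    (s := Metric.closedBall (k:ℂ) ‖z‖) (x := (k:ℂ)) (y := k + z) (C := C * (k/2) ^ (-a))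
    (fun s hs => (hd s (key s hs).2).hasDerivWithinAt) ?_ (convex_closedBall _ _)
    (by simp) (by simp)
  · simpa using this
  · intro s hs
    obtain ⟨h1, h2⟩ := key s hs
    refine (hb s (by linarith)).trans ?_
    gcongr ?_ * ?_
    apply Real.rpow_le_rpow_of_nonpos <;> linarith

lemma mvt_tendsto (f f' : ℂ → ℂ) (C a : ℝ) (hC : 0 ≤ C) (ha : 0 < a)
    (hd : ∀ s : ℂ, 0 < s.re → HasDerivAt f (f' s) s)
    (hb : ∀ s : ℂ, 1 ≤ ‖s‖ → ‖f' s‖ ≤ C * ‖s‖ ^ (-a)) (z : ℂ) :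
    Tendsto (fun n : ℕ => f (n + z) - f n) atTop (𝓝 0) := by
  have h0 : Tendsto (fun n : ℕ => C * ((n:ℝ)/2) ^ (-a) * ‖z‖) atTop (𝓝 0) := by
    have h1 : Tendsto (fun n : ℕ => ((n:ℝ)/2)) atTop atTop :=
      tendsto_natCast_atTop_atTop.atTop_div_const (by norm_num)
    have := (((tendsto_rpow_neg_atTop ha).comp h1).const_mul C).mul_const ‖z‖
    simpa using this
  apply squeeze_zero_norm' _ h0
  have : ∀ᶠ n : ℕ in atTop, 2 * ‖z‖ + 2 ≤ (n:ℝ) :=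
    tendsto_natCast_atTop_atTop.eventually_ge_atTop _
  filter_upwards [this] with n hn
  have := mvt_bound f f' C a hC ha.le hd hb z n hn
  simpa using this

lemma mvt_summable (f f' : ℂ → ℂ) (C a : ℝ) (hC : 0 ≤ C) (ha : 1 < a)
    (hd : ∀ s : ℂ, 0 < s.re → HasDerivAt f (f' s) s)
    (hb : ∀ s : ℂ, 1 ≤ ‖s‖ → ‖f' s‖ ≤ C * ‖s‖ ^ (-a)) (z : ℂ) :
    Summable (fun n : ℕ => f (((n:ℂ) + 1) + z) - f ((n:ℂ) + 1)) := by
  have h0 : Summable (fun n : ℕ => f (n + z) - f n) := by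
    have h1 : Summable (fun n : ℕ => C * ((n:ℝ)/2) ^ (-a) * ‖z‖) := by
      apply Summable.mul_right
      apply Summable.mul_left
      have : ∀ n : ℕ, ((n:ℝ)/2) ^ (-a) = (n:ℝ) ^ (-a) * (1/2:ℝ) ^ (-a) := by
        intro n
        rw [← Real.mul_rpow (by positivity) (by positivity)]
        congr 1
        ring
      simp_rw [this]
      exact (Real.summable_nat_rpow.2 (by linarith)).mul_right _
    apply Summable.of_norm_bounded_eventually_nat h1
    have : ∀ᶠ n : ℕ in atTop, 2 * ‖z‖ + 2 ≤ (n:ℝ) :=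
      tendsto_natCast_atTop_atTop.eventually_ge_atTop _
    filter_upwards [this] with n hn
    have := mvt_bound f f' C a hC (by linarith) hd hb z n hn
    simpa using this
  have := (summable_nat_add_iff 1).2 h0
  simpa using this

lemma slit_of_re (s : ℂ) (h : 0 < s.re) : s ∈ Complex.slitPlane := Or.inl h

lemma hd_log (s : ℂ) (h : s ∈ Complex.slitPlane) : HasDerivAt Complex.log (1 / s ^ 1) s := by
  simpa using Complex.hasDerivAt_log h

lemma hd_halflogsq (s : ℂ) (h : s ∈ Complex.slitPlane) :
    HasDerivAt (fun s => (1/2) * Complex.log s ^ 2) (Complex.log s / s ^ 1) s := by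
  have := ((Complex.hasDerivAt_log h).pow 2).const_mul (1/2 : ℂ)
  refine this.congr_deriv ?_
  simp; ring

lemma hd_inv (s : ℂ) (h : s ≠ 0) : HasDerivAt (fun s : ℂ => 1 / s) ((-1) / s ^ 2) s := by
  have := hasDerivAt_inv h
  simp only [one_div]
  refine this.congr_deriv ?_
  ring

lemma hd_inv2 (s : ℂ) (h : s ≠ 0) : HasDerivAt (fun s : ℂ => (-1) / s ^ 2) (gOne s) s := by
  have := ((hasDerivAt_id s).pow 2).fun_inv (pow_ne_zero 2 h) |>.const_mul (-1)
  simp only [div_eq_mul_inv]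
  refine this.congr_deriv ?_
  simp [gOne]
  field_simp

lemma hd_logdiv (s : ℂ) (h : s ∈ Complex.slitPlane) :
    HasDerivAt (fun s : ℂ => Complex.log s / s) ((1 - Complex.log s) / s ^ 2) s := by
  have h0 : s ≠ 0 := Complex.slitPlane_ne_zero h
  have := (Complex.hasDerivAt_log h).div (hasDerivAt_id s) h0
  refine this.congr_deriv ?_
  simp
  field_simp

lemma hd_logdiv2 (s : ℂ) (h : s ∈ Complex.slitPlane) :
    HasDerivAt (fun s : ℂ => (1 - Complex.log s) / s ^ 2) (gTwo s) s := by
  have h0 : s ≠ 0 := Complex.slitPlane_ne_zero h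
  have := ((Complex.hasDerivAt_log h).const_sub 1).div ((hasDerivAt_id s).pow 2) (pow_ne_zero 2 h0)
  refine this.congr_deriv ?_
  simp [gTwo]
  field_simp
  ring

lemma cont_gOne : ContinuousOn gOne Complex.slitPlane := by
  intro s hs
  have h0 : s ≠ 0 := Complex.slitPlane_ne_zero hs
  apply ContinuousAt.continuousWithinAt
  unfold gOne
  exact continuousAt_const.div (by fun_prop) (pow_ne_zero 3 h0)

lemma cont_gTwo : ContinuousOn gTwo Complex.slitPlane := by
  intro s hs
  have h0 : s ≠ 0 := Complex.slitPlane_ne_zero hs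
  apply ContinuousAt.continuousWithinAt
  unfold gTwo
  have := continuousAt_clog hs
  exact ContinuousAt.div (by fun_prop) (by fun_prop) (pow_ne_zero 3 h0)

lemma lower_bound (ζ : ℂ) (h : ζ.im ≠ 0) : ∃ κ : ℝ, 0 < κ ∧ ∀ v m : ℝ, 0 ≤ v → 0 ≤ m →
    κ * (v + m) ≤ ‖(v:ℂ) + m * ζ‖ ∧ κ * (v + m) ≤ ‖(v:ℂ) - m * ζ‖ := by
  have ha : 0 < |ζ.im| := abs_pos.2 h
  have hb := norm_nonneg ζ
  have key : ∀ ξ : ℂ, |ξ.im| = |ζ.im| → ‖ξ‖ = ‖ζ‖ → ∀ v m : ℝ, 0 ≤ v → 0 ≤ m →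
      (1 + (‖ζ‖ + 1) / |ζ.im|)⁻¹ * (v + m) ≤ ‖(v:ℂ) + m * ξ‖ := by
    intro ξ h1 h2 v m hv hm
    rw [inv_mul_le_iff₀ (by positivity)]
    have e1 : m * |ζ.im| ≤ ‖(v:ℂ) + m * ξ‖ := by
      have := Complex.abs_im_le_norm ((v:ℂ) + m * ξ)
      simp [abs_mul, abs_of_nonneg hm, h1] at this
      exact this
    have e2 : v - m * ‖ζ‖ ≤ ‖(v:ℂ) + m * ξ‖ := by
      have := norm_sub_le ((v:ℂ) + m * ξ) (m * ξ)
      simp [abs_of_nonneg hm, abs_of_nonneg hv, h2] at this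
      linarith
    have e3 : m ≤ ‖(v:ℂ) + m * ξ‖ / |ζ.im| := by rwa [le_div_iff₀ ha]
    have e4 : (1 + (‖ζ‖ + 1) / |ζ.im|) * ‖(v:ℂ) + m * ξ‖ =
      ‖(v:ℂ) + m * ξ‖ + (‖ζ‖+1) * (‖(v:ℂ) + m * ξ‖ / |ζ.im|) := by ring
    rw [e4]
    nlinarith
  refine ⟨(1 + (‖ζ‖ + 1) / |ζ.im|)⁻¹, by positivity, ?_⟩
  intro v m hv hm
  refine ⟨key ζ rfl rfl v m hv hm, ?_⟩
  have := key (-ζ) (by simp) (by simp) v m hv hm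
  simpa [sub_eq_add_neg] using this


lemma g_line (ζ : ℂ) (h : ζ.im ≠ 0) : ∃ C : ℝ, 0 ≤ C ∧ ∀ m v : ℝ, 1 ≤ m → 0 ≤ v →
    ‖gOne (v + m * ζ)‖ ≤ C * (v + m) ^ (-(5/2) : ℝ) ∧ ‖gOne (v - m * ζ)‖ ≤ C * (v + m) ^ (-(5/2) : ℝ) ∧
    ‖gTwo (v + m * ζ)‖ ≤ C * (v + m) ^ (-(5/2) : ℝ) ∧ ‖gTwo (v - m * ζ)‖ ≤ C * (v + m) ^ (-(5/2) : ℝ) := by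
  obtain ⟨κ, hκ, hl⟩ := lower_bound ζ h
  obtain ⟨C, hC, hg⟩ := g_bounds κ hκ
  refine ⟨C * κ ^ (-(5/2):ℝ), by positivity, ?_⟩
  intro m v hm hv
  obtain ⟨l1, l2⟩ := hl v m hv (by linarith)
  have hk : κ ≤ κ * (v + m) := by nlinarith
  have key : ∀ s : ℂ, κ * (v+m) ≤ ‖s‖ → ‖s‖ ^ (-(5/2) : ℝ) ≤ κ ^ (-(5/2):ℝ) * (v+m) ^ (-(5/2):ℝ) := by
    intro s hs
    rw [← Real.mul_rpow hκ.le (by linarith)]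
    apply Real.rpow_le_rpow_of_nonpos (by nlinarith) hs (by norm_num)
  have k1 := mul_le_mul_of_nonneg_left (key _ l1) hC
  have k2 := mul_le_mul_of_nonneg_left (key _ l2) hC
  obtain ⟨a1, a2, -⟩ := hg _ (hk.trans l1)
  obtain ⟨b1, b2, -⟩ := hg _ (hk.trans l2)
  simp only [mul_assoc] at *
  exact ⟨a1.trans k1, b1.trans k2, a2.trans k1, b2.trans k2⟩

lemma int_rpow (m : ℝ) (hm : 0 < m) : IntegrableOn (fun v : ℝ => (v + m) ^ (-(5/2):ℝ)) (Set.Ioi 0) :=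
  integrableOn_add_rpow_Ioi_of_lt (by norm_num) (by linarith)

lemma integral_rpow_52 (m : ℝ) (hm : 0 < m) :
    ∫ v in Set.Ioi (0:ℝ), (v + m) ^ (-(5/2):ℝ) = (2/3) * m ^ (-(3/2):ℝ) := by
  have := (measurePreserving_add_right volume m).setIntegral_preimage_emb
    (measurableEmbedding_addRight m) (fun v : ℝ => v ^ (-(5/2):ℝ)) (Set.Ioi m)
  rw [Set.preimage_add_const_Ioi, sub_self] at this
  rw [this, integral_Ioi_rpow_of_lt (by norm_num) hm]
  norm_num
  ring

lemma line_slit (z : ℂ) (hz : z.im ≠ 0) (v : ℝ) : (v:ℂ) + z ∈ Complex.slitPlane := by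
  right; simpa using hz

lemma line_hd (f f' : ℂ → ℂ) (hd : ∀ s ∈ Complex.slitPlane, HasDerivAt f (f' s) s) (z : ℂ)
    (hz : z.im ≠ 0) (v : ℝ) :
    HasDerivAt (fun v : ℝ => f (v + z) + f (v - z)) (f' (v + z) + f' (v - z)) v := by
  have key : ∀ z : ℂ, z.im ≠ 0 → HasDerivAt (fun v : ℝ => f (v + z)) (f' (v + z)) v := by
    intro z hz
    have h1 : HasDerivAt (fun s : ℂ => f (s + z)) (f' (v + z)) v :=
      HasDerivAt.comp_add_const (v:ℂ) z (hd _ (line_slit z hz v))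
    exact h1.comp_ofReal
  have h2 := key (-z) (by simpa using hz)
  simp only [← sub_eq_add_neg] at h2
  exact (key z hz).add h2

lemma line_cont (g : ℂ → ℂ) (hg : ContinuousOn g Complex.slitPlane) (z : ℂ)
    (hz : z.im ≠ 0) : Continuous (fun v : ℝ => g (v + z) + g (v - z)) := by
  have key : ∀ z : ℂ, z.im ≠ 0 → Continuous (fun v : ℝ => g (v + z)) := by
    intro z hz
    exact hg.comp_continuous (by fun_prop) (line_slit z hz)
  have h2 := key (-z) (by simpa using hz)
  simp only [← sub_eq_add_neg] at h2
  exact (key z hz).add h2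

lemma integrableOn_of_bound (F : ℝ → ℂ) (hF : ContinuousOn F (Set.Ioi 0)) (C m : ℝ) (hm : 0 < m)
    (hb : ∀ v : ℝ, 0 < v → ‖F v‖ ≤ C * (v + m) ^ (-(5/2):ℝ)) : IntegrableOn F (Set.Ioi 0) := by
  refine Integrable.mono' ((int_rpow m hm).const_mul C) (hF.aestronglyMeasurable measurableSet_Ioi) ?_
  exact (ae_restrict_iff' measurableSet_Ioi).2 (Eventually.of_forall hb)

lemma trap_line (f f' g Fa : ℂ → ℂ) (hd : ∀ s ∈ Complex.slitPlane, HasDerivAt f (f' s) s)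
    (hd2 : ∀ s ∈ Complex.slitPlane, HasDerivAt f' (g s) s)
    (hFa : ∀ s ∈ Complex.slitPlane, HasDerivAt Fa (f s) s)
    (hg : ContinuousOn g Complex.slitPlane) (z : ℂ) (hz : z.im ≠ 0)
    (hb : ∃ C : ℝ, ∀ v : ℝ, 0 ≤ v →
      ‖g (v + z)‖ ≤ C * (v + 1) ^ (-(5/2):ℝ) ∧ ‖g (v - z)‖ ≤ C * (v+1) ^ (-(5/2):ℝ)) :
    Tendsto (fun n : ℕ => (1/2) * (f z + f (-z)) +
        ∑ k ∈ Finset.range n, (f (((k:ℂ)+1) + z) + f (((k:ℂ)+1) - z))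
        - (1/2) * (f (n + z) + f (n - z))
        - (Fa (n + z) + Fa (n - z)) + (Fa z + Fa (-z))) atTop
      (𝓝 (∫ v in Set.Ioi (0:ℝ), (trapW v : ℂ) * (g (v + z) + g (v - z)))) := by
  obtain ⟨C, hb⟩ := hb
  have hgc := line_cont g hg z hz
  have hfc : Continuous (fun v : ℝ => f (v + z) + f (v - z)) :=
    line_cont f (fun s hs => (hd s hs).continuousAt.continuousWithinAt) z hz
  have := trap_tendsto (fun v : ℝ => f (v + z) + f (v - z)) (fun v => f' (v + z) + f' (v - z))
    (fun v => g (v + z) + g (v - z)) 0 (fun v _ => line_hd f f' hd z hz v)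
    (fun v _ => line_hd f' g hd2 z hz v) hgc.continuousOn ?_
  · simp only [Nat.cast_zero] at this
    refine this.congr ?_
    intro n
    rw [trap_sum_form (fun v : ℝ => f (v + z) + f (v - z)) 0 n,
      intervalIntegral.integral_eq_sub_of_hasDerivAt (fun v _ => line_hd Fa f hFa z hz v)
        (hfc.intervalIntegrable _ _)]
    simp
    ring
  · simp only [Nat.cast_zero]
    refine integrableOn_of_bound _ hgc.continuousOn (2*C) 1 one_pos ?_
    intro v hv
    obtain ⟨h1, h2⟩ := hb v hv.le
    refine (norm_add_le _ _).trans ?_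
    linarith

lemma gamma1_tendsto : Tendsto (fun n : ℕ => ∑ k ∈ Finset.range n,
    Complex.log ((k:ℂ)+1) / ((k:ℂ)+1) - (1/2) * Complex.log n ^ 2) atTop (𝓝 (gamma1 : ℂ)) := by
  have hslit : ∀ u : ℝ, 0 < u → (u:ℂ) ∈ Complex.slitPlane := fun u hu => Or.inl (by simpa using hu)
  obtain ⟨C, hC, hgb⟩ := g_bounds 1 one_pos
  have hpos : ∀ u : ℝ, ((1:ℕ):ℝ) ≤ u → 0 < u := fun u hu => by
    rw [Nat.cast_one] at hu; linarith
  have hgc : ContinuousOn (fun u : ℝ => gTwo u) (Set.Ioi 0) :=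
    cont_gTwo.comp (by fun_prop) (fun u hu => hslit u hu)
  have h := trap_tendsto (fun u : ℝ => Complex.log u / u) (fun u => (1 - Complex.log u) / (u:ℂ)^2)
    (fun u => gTwo u) 1 (fun u hu => (hd_logdiv _ (hslit u (hpos u hu))).comp_ofReal)
    (fun u hu => (hd_logdiv2 _ (hslit u (hpos u hu))).comp_ofReal)
    (hgc.mono fun u hu => hpos u hu) ?_
  swap
  · refine Integrable.mono' (g := fun u : ℝ => C * u ^ (-(5/2):ℝ)) ?_ ?_ ?_
    · apply Integrable.const_mul
      exact integrableOn_Ioi_rpow_of_lt (by norm_num) (by norm_num)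
    · exact (hgc.mono fun u hu => hpos u (le_of_lt hu)).aestronglyMeasurable measurableSet_Ioi
    · refine (ae_restrict_iff' measurableSet_Ioi).2 (Eventually.of_forall fun u hu => ?_)
      have h0 : 0 < u := hpos u (le_of_lt hu)
      have hu' : (1:ℝ) < u := by simpa using hu
      have := (hgb u (by simp [abs_of_pos h0]; linarith)).2.1
      simpa [abs_of_pos h0] using this
  set L := ∫ u in Set.Ioi ((1:ℕ):ℝ), (trapW u : ℂ) * gTwo u with hL
  have hc : Tendsto (fun n : ℕ => ∑ k ∈ Finset.range n,
    Complex.log ((k:ℂ)+1) / ((k:ℂ)+1) - (1/2) * Complex.log n ^ 2) atTop (𝓝 L) := by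
    rw [← tendsto_add_atTop_iff_nat 1]
    have h0 : Tendsto (fun n : ℕ => (1/2) * (Complex.log ((1 + n:ℕ):ℂ) / ((1+n:ℕ):ℂ))) atTop (𝓝 0) := by
      have t1 : Tendsto (fun x : ℝ => Real.log x / x) atTop (𝓝 0) := by
        simpa using (Real.isLittleO_log_id_atTop).tendsto_div_nhds_zero
      have t2 : Tendsto (fun n : ℕ => ((1+n:ℕ):ℝ)) atTop atTop :=
        tendsto_natCast_atTop_atTop.comp
          (tendsto_atTop_mono (fun n => Nat.le_add_left n 1) tendsto_id)
      have t3 := (Complex.continuous_ofReal.tendsto 0).comp (t1.comp t2)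
      have t4 := t3.const_mul (1/2 : ℂ)
      simp only [Complex.ofReal_zero, mul_zero] at t4
      refine t4.congr fun n => ?_
      simp only [Function.comp]
      push_cast
      rw [Complex.ofReal_log (by positivity)]
      push_cast
      rfl
    have := h.add h0
    rw [add_zero] at this
    refine this.congr fun n => ?_
    rw [trap_sum_form (fun u : ℝ => Complex.log u / u) 1 n,
      intervalIntegral.integral_eq_sub_of_hasDerivAt
        (f := fun u : ℝ => (1/2) * Complex.log u ^ 2) ?_ ?_]
    · rw [Finset.sum_range_succ']
      simp [add_comm, add_left_comm]
      ring
    · intro u hu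
      rw [Set.uIcc_of_le (by push_cast; linarith [Nat.cast_nonneg (α := ℝ) n])] at hu
      simpa using (hd_halflogsq _ (hslit u (hpos u hu.1))).comp_ofReal
    · apply ContinuousOn.intervalIntegrable
      rw [Set.uIcc_of_le (by push_cast; linarith [Nat.cast_nonneg (α := ℝ) n])]
      intro u hu
      exact ((hd_logdiv _ (hslit u (hpos u hu.1))).comp_ofReal).continuousAt.continuousWithinAt
  have e : ∀ n : ℕ, (∑ k ∈ Finset.range n,
      Complex.log ((k:ℂ)+1) / ((k:ℂ)+1) - (1/2) * Complex.log n ^ 2) =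
      ((∑ j ∈ Finset.Icc 1 n, Real.log j / j - (Real.log n) ^ 2 / 2 : ℝ) : ℂ) := by
    intro n
    have : ∑ j ∈ Finset.Icc 1 n, Real.log j / j = ∑ k ∈ Finset.range n, Real.log ((k+1:ℕ):ℝ) / ((k+1:ℕ):ℝ) := by
      rw [Finset.range_eq_Ico, Finset.sum_Ico_add' (fun j : ℕ => Real.log (j:ℝ) / (j:ℝ)) 0 n 1]
      rfl
    rw [this]
    push_cast
    congr 1
    · refine Finset.sum_congr rfl fun k _ => ?_
      rw [Complex.ofReal_log (by positivity)]
      push_cast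
      rfl
    · ring
  have hr : Tendsto (fun n : ℕ => ∑ j ∈ Finset.Icc 1 n, Real.log j / j - (Real.log n) ^ 2 / 2) atTop (𝓝 L.re) := by
    have := (Complex.continuous_re.tendsto L).comp hc
    refine this.congr fun n => ?_
    simp only [Function.comp]
    rw [e, Complex.ofReal_re]
  have hg : Tendsto (fun n : ℕ => ∑ j ∈ Finset.Icc 1 n, Real.log j / j - (Real.log n) ^ 2 / 2) atTop (𝓝 gamma1) :=
    tendsto_nhds_limUnder ⟨_, hr⟩
  simp_rw [e]
  exact (Complex.continuous_ofReal.tendsto _).comp hg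


lemma gline_one (z : ℂ) (hz : z.im ≠ 0) : ∃ C : ℝ, ∀ v : ℝ, 0 ≤ v →
      ‖gOne (v + z)‖ ≤ C * (v + 1) ^ (-(5/2):ℝ) ∧ ‖gOne (v - z)‖ ≤ C * (v+1) ^ (-(5/2):ℝ) := by
  obtain ⟨C, -, h⟩ := g_line z hz
  refine ⟨C, fun v hv => ?_⟩
  have := h 1 v le_rfl hv
  simp only [Complex.ofReal_one, one_mul] at this
  exact ⟨this.1, this.2.1⟩

lemma gline_two (z : ℂ) (hz : z.im ≠ 0) : ∃ C : ℝ, ∀ v : ℝ, 0 ≤ v →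
      ‖gTwo (v + z)‖ ≤ C * (v + 1) ^ (-(5/2):ℝ) ∧ ‖gTwo (v - z)‖ ≤ C * (v+1) ^ (-(5/2):ℝ) := by
  obtain ⟨C, -, h⟩ := g_line z hz
  refine ⟨C, fun v hv => ?_⟩
  have := h 1 v le_rfl hv
  simp only [Complex.ofReal_one, one_mul] at this
  exact ⟨this.2.2.1, this.2.2.2⟩

lemma re_pos_ne (s : ℂ) (h : 0 < s.re) : s ≠ 0 := Complex.slitPlane_ne_zero (Or.inl h)

lemma tendsto_of_mvt (f f' : ℂ → ℂ) (C a : ℝ) (hC : 0 ≤ C) (ha : 0 < a)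
    (hd : ∀ s : ℂ, 0 < s.re → HasDerivAt f (f' s) s)
    (hb : ∀ s : ℂ, 1 ≤ ‖s‖ → ‖f' s‖ ≤ C * ‖s‖ ^ (-a)) (z : ℂ) :
    Tendsto (fun n : ℕ => f (n + z) + f (n - z) - 2 * f n) atTop (𝓝 0) := by
  have := (mvt_tendsto f f' C a hC ha hd hb z).add (mvt_tendsto f f' C a hC ha hd hb (-z))
  rw [add_zero] at this
  refine this.congr fun n => ?_
  rw [← sub_eq_add_neg]
  ring

lemma logdiv_nat_tendsto : Tendsto (fun n : ℕ => Complex.log n / n) atTop (𝓝 0) := by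
  have t1 : Tendsto (fun x : ℝ => Real.log x / x) atTop (𝓝 0) := by
    simpa using (Real.isLittleO_log_id_atTop).tendsto_div_nhds_zero
  have t3 := (Complex.continuous_ofReal.tendsto 0).comp (t1.comp tendsto_natCast_atTop_atTop)
  simp only [Complex.ofReal_zero] at t3
  refine t3.congr fun n => ?_
  simp only [Function.comp]
  push_cast
  rfl

lemma inv_nat_tendsto : Tendsto (fun n : ℕ => 1 / (n:ℂ)) atTop (𝓝 0) := by
  have t3 := (Complex.continuous_ofReal.tendsto 0).comp (tendsto_one_div_atTop_nhds_zero_nat (𝕜 := ℝ))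
  simp only [Complex.ofReal_zero] at t3
  refine t3.congr fun n => ?_
  simp [Function.comp]

lemma psi_int (z : ℂ) (hz : z.im ≠ 0) :
    psi1 z + psi1 (-z) - (1/2) * (Complex.log z ^ 2 + Complex.log (-z) ^ 2)
      + (1/2) * (Complex.log z / z + Complex.log (-z) / (-z)) =
    - ∫ v in Set.Ioi (0:ℝ), (trapW v : ℂ) * (gTwo (v + z) + gTwo (v - z)) := by
  obtain ⟨C, hC, hgb⟩ := g_bounds 1 one_pos
  have T := trap_line (fun s => Complex.log s / s) (fun s => (1 - Complex.log s) / s ^ 2) gTwo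
    (fun s => (1/2) * Complex.log s ^ 2) hd_logdiv hd_logdiv2
    (fun s hs => by simpa using hd_halflogsq s hs) cont_gTwo z hz (gline_two z hz)
  have M1 := tendsto_of_mvt (fun s => Complex.log s / s) (fun s => (1 - Complex.log s) / s ^ 2) C (3/2)
    hC (by norm_num) (fun s hs => hd_logdiv s (Or.inl hs)) (fun s hs => (hgb s hs).2.2.1) z
  have M2 := tendsto_of_mvt (fun s => (1/2) * Complex.log s ^ 2) (fun s => Complex.log s / s ^ 1) C (1/2)
    hC (by norm_num) (fun s hs => hd_halflogsq s (Or.inl hs)) (fun s hs => (hgb s hs).2.2.2.2.1) z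
  have S : ∀ z : ℂ, _ := fun z : ℂ => (mvt_summable (fun s => Complex.log s / s) (fun s => (1 - Complex.log s) / s ^ 2) C (3/2)
    hC (by norm_num) (fun s hs => hd_logdiv s (Or.inl hs)) (fun s hs => (hgb s hs).2.2.1) z).hasSum.tendsto_sum_nat
  have S1 := S z
  have S2 := S (-z)
  have G := gamma1_tendsto
  have L := logdiv_nat_tendsto
  have R := (((((S1.add S2).add (G.const_mul 2)).sub (M1.const_mul (1/2))).sub M2).sub L).add_const
    ((1/2) * (Complex.log z / z + Complex.log (-z) / (-z)) +
      ((1/2) * Complex.log z ^ 2 + (1/2) * Complex.log (-z) ^ 2))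
  have U := tendsto_nhds_unique (T.congr (fun n => ?_)) R
  · rw [U, psi1, psi1]
    ring
  · simp only [Finset.sum_add_distrib, Finset.sum_sub_distrib, ← sub_eq_add_neg]
    ring

lemma harm_tendsto : Tendsto (fun n : ℕ => ∑ k ∈ Finset.range n,
    1 / ((k:ℂ)+1) - Complex.log n) atTop (𝓝 (eulerGamma : ℂ)) := by
  have := (Complex.continuous_ofReal.tendsto _).comp Real.tendsto_harmonic_sub_log
  refine this.congr fun n => ?_
  simp only [Function.comp, harmonic]
  push_cast
  simp

lemma dig_int (z : ℂ) (hz : z.im ≠ 0) :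
    Complex.log z + Complex.log (-z) - (digamma z + digamma (-z)) =
    ∫ v in Set.Ioi (0:ℝ), (trapW v : ℂ) * (gOne (v + z) + gOne (v - z)) := by
  obtain ⟨C, hC, hgb⟩ := g_bounds 1 one_pos
  have T := trap_line (fun s => 1 / s) (fun s => (-1) / s ^ 2) gOne
    Complex.log (fun s hs => hd_inv s (Complex.slitPlane_ne_zero hs))
    (fun s hs => hd_inv2 s (Complex.slitPlane_ne_zero hs))
    (fun s hs => by simpa using hd_log s hs) cont_gOne z hz (gline_one z hz)
  have M1 := tendsto_of_mvt (fun s => 1 / s) (fun s => (-1) / s ^ 2) C (3/2)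
    hC (by norm_num) (fun s hs => hd_inv s (re_pos_ne s hs)) (fun s hs => (hgb s hs).2.2.2.1) z
  have M2 := tendsto_of_mvt Complex.log (fun s => 1 / s ^ 1) C (1/2)
    hC (by norm_num) (fun s hs => hd_log s (Or.inl hs)) (fun s hs => (hgb s hs).2.2.2.2.2) z
  have S : ∀ z : ℂ, _ := fun z : ℂ => (mvt_summable (fun s => 1 / s) (fun s => (-1) / s ^ 2) C (3/2)
    hC (by norm_num) (fun s hs => hd_inv s (re_pos_ne s hs)) (fun s hs => (hgb s hs).2.2.2.1) z).neg.hasSum.tendsto_sum_nat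
  have S1 := S z
  have S2 := S (-z)
  have G := harm_tendsto
  have L := inv_nat_tendsto
  have R := (((((S1.add S2).neg.add (G.const_mul 2)).sub (M1.const_mul (1/2))).sub M2).sub L).add_const
    ((1/2) * (1 / z + 1 / (-z)) + (Complex.log z + Complex.log (-z)))
  have U := tendsto_nhds_unique (T.congr (fun n => ?_)) R
  · rw [U, digamma, digamma]
    simp only [neg_sub]
    ring
  · simp only [Finset.sum_add_distrib, Finset.sum_sub_distrib, ← sub_eq_add_neg, Finset.sum_neg_distrib]
    ring


noncomputable def zeta0 (y : ℂ) : ℂ := 2 * (Real.pi : ℂ) * Complex.I / y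

noncomputable def zN (y : ℂ) (n : ℕ) : ℂ := 2 * (Real.pi : ℂ) * Complex.I * ((n : ℂ) + 1) / y

lemma zN_eq (y : ℂ) (n : ℕ) : zN y n = ((n + 1 : ℝ) : ℂ) * zeta0 y := by
  unfold zN zeta0; push_cast; ring

lemma zeta0_im (y : ℂ) (hy : 0 < y.re) : 0 < (zeta0 y).im := by
  have hn : 0 < Complex.normSq y := Complex.normSq_pos.2 (re_pos_ne y hy)
  have hp := Real.pi_pos
  have : (zeta0 y).im = 2 * Real.pi * y.re / Complex.normSq y := by
    unfold zeta0
    rw [Complex.div_im]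
    simp
  rw [this]
  positivity

lemma zN_im (y : ℂ) (hy : 0 < y.re) (n : ℕ) : 0 < (zN y n).im := by
  rw [zN_eq, Complex.im_ofReal_mul]
  have := zeta0_im y hy
  positivity

lemma log_neg_of_im_pos (z : ℂ) (h : 0 < z.im) : Complex.log (-z) = Complex.log z - Real.pi * Complex.I := by
  apply Complex.ext
  · simp [Complex.log_re]
  · simp [Complex.log_im, Complex.arg_neg_eq_arg_sub_pi_of_im_pos h]

lemma log_I_mul_of_re_pos (w : ℂ) (h : 0 < w.re) :
    Complex.log (Complex.I * w) = Complex.log w + Real.pi / 2 * Complex.I := by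
  have hw := re_pos_ne w h
  have := Complex.abs_arg_lt_pi_div_two_iff.2 (Or.inl h)
  rw [abs_lt] at this
  have hp := Real.pi_pos
  rw [(Complex.log_mul_eq_add_log_iff Complex.I_ne_zero hw).2, Complex.log_I]
  · ring
  · rw [Complex.arg_I]
    constructor <;> linarith

lemma psiTerm_eq (y : ℂ) (hy : 0 < y.re) (n : ℕ) :
    psiTerm y n = - ∫ v in Set.Ioi (0:ℝ), (trapW v : ℂ) * (gTwo (v + zN y n) + gTwo (v - zN y n)) := by
  have hz := zN_im y hy n
  have hy0 := re_pos_ne y hy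
  have hn : (n:ℂ) + 1 ≠ 0 := Nat.cast_add_one_ne_zero n
  have hz0 : zN y n ≠ 0 := by intro h; rw [h] at hz; simp at hz
  have hp : (Real.pi : ℂ) ≠ 0 := by exact_mod_cast Real.pi_ne_zero
  rw [← psi_int _ hz.ne', log_neg_of_im_pos _ hz]
  have e : (1/2) * (Complex.log (zN y n) / zN y n + (Complex.log (zN y n) - Real.pi * Complex.I) / (- zN y n))
      = y / (4 * ((n:ℂ)+1)) := by
    have : (1/2) * (Complex.log (zN y n) / zN y n + (Complex.log (zN y n) - Real.pi * Complex.I) / (- zN y n))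
      = (1/2) * (Real.pi * Complex.I / zN y n) := by
      field_simp
      ring
    rw [this, zN]
    field_simp
    ring
  rw [e, psiTerm]
  change psi1 (zN y n) + psi1 (- zN y n) - (1/2) * (Complex.log (zN y n) ^ 2 + Complex.log (- zN y n) ^ 2)
    + _ = _
  rw [log_neg_of_im_pos _ hz]

lemma wigTerm_eq (y : ℂ) (hy : 0 < y.re) (n : ℕ) :
    wigTerm y n = (1/2) * ∫ v in Set.Ioi (0:ℝ), (trapW v : ℂ) * (gOne (v + zN y n) + gOne (v - zN y n)) := by
  have hz := zN_im y hy n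
  rw [← dig_int _ hz.ne', wigTerm]
  change Complex.log (2 * (Real.pi : ℂ) * ((n : ℂ) + 1) / y)
    - (1/2) * (digamma (zN y n) + digamma (- zN y n)) = _
  have e : zN y n = Complex.I * (2 * (Real.pi : ℂ) * ((n : ℂ) + 1) / y) := by
    unfold zN; ring
  have hre : 0 < (2 * (Real.pi : ℂ) * ((n : ℂ) + 1) / y).re := by
    have h2 := hz
    rw [e] at h2
    simpa using h2
  have h3 := log_I_mul_of_re_pos _ hre
  rw [← e] at h3
  rw [log_neg_of_im_pos _ hz, h3]
  ring

lemma D_bound (y : ℂ) (hy : 0 < y.re) : ∃ C : ℝ, 0 ≤ C ∧ ∀ (n : ℕ) (v : ℝ), 0 ≤ v →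
    ‖gOne (v + zN y n) + gOne (v - zN y n)‖ ≤ C * (v+1) ^ (-(5/4):ℝ) * ((n:ℝ)+1) ^ (-(5/4):ℝ) ∧
    ‖gTwo (v + zN y n) + gTwo (v - zN y n)‖ ≤ C * (v+1) ^ (-(5/4):ℝ) * ((n:ℝ)+1) ^ (-(5/4):ℝ) := by
  obtain ⟨C, hC, h⟩ := g_line (zeta0 y) (zeta0_im y hy).ne'
  refine ⟨2 * C, by positivity, ?_⟩
  intro n v hv
  have hn : (0:ℝ) ≤ n := Nat.cast_nonneg n
  obtain ⟨h1, h2, h3, h4⟩ := h (n+1) v (by linarith) hv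
  rw [← zN_eq] at h1 h2 h3 h4
  have e : (v + ((n:ℝ)+1)) ^ (-(5/2):ℝ) ≤ (v+1) ^ (-(5/4):ℝ) * ((n:ℝ)+1) ^ (-(5/4):ℝ) := by
    have : (v + ((n:ℝ)+1)) ^ (-(5/2):ℝ) = (v + ((n:ℝ)+1)) ^ (-(5/4):ℝ) * (v + ((n:ℝ)+1)) ^ (-(5/4):ℝ) := by
      rw [← Real.rpow_add (by linarith)]; norm_num
    rw [this]
    gcongr ?_ * ?_
    · exact Real.rpow_le_rpow_of_nonpos (by linarith) (by linarith) (by norm_num)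
    · exact Real.rpow_le_rpow_of_nonpos (by linarith) (by linarith) (by norm_num)
  have e2 := mul_le_mul_of_nonneg_left e hC
  constructor
  · refine (norm_add_le _ _).trans ?_
    nlinarith
  · refine (norm_add_le _ _).trans ?_
    nlinarith

lemma int_rpow54 : IntegrableOn (fun v : ℝ => (v + 1) ^ (-(5/4):ℝ)) (Set.Ioi 0) :=
  integrableOn_add_rpow_Ioi_of_lt (by norm_num) (by linarith)

lemma summable_54 : Summable (fun n : ℕ => ((n:ℝ)+1) ^ (-(5/4):ℝ)) := by
  have := (summable_nat_add_iff 1).2 (Real.summable_nat_rpow.2 (by norm_num : (-(5/4):ℝ) < -1))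
  simpa using this

lemma series_int (F : ℕ → ℝ → ℂ) (hF : ∀ n, Continuous (F n)) (C : ℝ)
    (hb : ∀ (n : ℕ) (v : ℝ), 0 ≤ v → ‖F n v‖ ≤ C * (v+1) ^ (-(5/4):ℝ) * ((n:ℝ)+1) ^ (-(5/4):ℝ)) :
    HasSum (fun n => ∫ v in Set.Ioi (0:ℝ), (trapW v : ℂ) * F n v)
      (∫ v in Set.Ioi (0:ℝ), (trapW v : ℂ) * ∑' n, F n v) ∧
    ContinuousOn (fun v => ∑' n, F n v) (Set.Ici 0) ∧
    IntegrableOn (fun v => ∑' n, F n v) (Set.Ioi 0) ∧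
    ∀ n, IntegrableOn (fun v => (trapW v : ℂ) * F n v) (Set.Ioi 0) := by
  have hC : 0 ≤ C := by
    have := (norm_nonneg _).trans (hb 0 0 le_rfl)
    simpa using this
  have hIntg : ∀ n, IntegrableOn (F n) (Set.Ioi 0) := by
    intro n
    refine Integrable.mono' ((int_rpow54.const_mul C).mul_const (((n:ℝ)+1) ^ (-(5/4):ℝ)))
      (hF n).aestronglyMeasurable ?_
    exact (ae_restrict_iff' measurableSet_Ioi).2 (Eventually.of_forall fun v hv => hb n v (le_of_lt hv))
  have hintW : ∀ n, IntegrableOn (fun v => (trapW v : ℂ) * F n v) (Set.Ioi 0) := by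
    intro n
    refine Integrable.mono (hIntg n) ?_ ?_
    · exact (Complex.measurable_ofReal.comp trapW_measurable).aestronglyMeasurable.mul
        (hIntg n).aestronglyMeasurable
    · exact Filter.Eventually.of_forall fun u => trapW_norm_mul_le u _
  have hcont : ContinuousOn (fun v => ∑' n, F n v) (Set.Ici 0) := by
    refine continuousOn_tsum (fun n => (hF n).continuousOn) (summable_54.mul_left C) ?_
    intro n v hv
    refine (hb n v hv).trans ?_
    gcongr
    have : (v+1) ^ (-(5/4):ℝ) ≤ 1 := Real.rpow_le_one_of_one_le_of_nonpos (by linarith [Set.mem_Ici.1 hv]) (by norm_num)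
    nlinarith
  refine ⟨?_, hcont, ?_, hintW⟩
  · have := hasSum_integral_of_summable_integral_norm hintW ?_
    · simpa only [tsum_mul_left] using this
    · refine Summable.of_nonneg_of_le (fun n => integral_nonneg fun v => norm_nonneg _) (fun n => ?_)
        (summable_54.mul_left (C * ∫ v in Set.Ioi (0:ℝ), (v + 1) ^ (-(5/4):ℝ)))
      rw [← integral_const_mul, ← integral_mul_const]
      refine setIntegral_mono_on (hintW n).norm ((int_rpow54.const_mul C).mul_const _) measurableSet_Ioi ?_
      intro v hv
      exact (trapW_norm_mul_le _ _).trans (hb n v (le_of_lt hv))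
  · refine Integrable.mono' (int_rpow54.const_mul (C * ∑' n : ℕ, ((n:ℝ)+1) ^ (-(5/4):ℝ)))
      ((hcont.mono Set.Ioi_subset_Ici_self).aestronglyMeasurable measurableSet_Ioi) ?_
    refine (ae_restrict_iff' measurableSet_Ioi).2 (Eventually.of_forall fun v hv => ?_)
    have hs := summable_54.mul_left (C * (v+1) ^ (-(5/4):ℝ))
    have := tsum_of_norm_bounded hs.hasSum (fun n => hb n v (le_of_lt hv))
    refine this.trans (le_of_eq ?_)
    rw [tsum_mul_left]
    ring


noncomputable def Dn (y : ℂ) (n : ℕ) (v : ℝ) : ℂ :=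
  (gTwo (v + zN y n) + gTwo (v - zN y n))
    + ((eulerGamma : ℂ) + Complex.log y) * (gOne (v + zN y n) + gOne (v - zN y n))

lemma rhs_main (y : ℂ) (hy : 0 < y.re) :
    Summable (wigTerm y) ∧ Summable (psiTerm y) ∧
    ∑' n, psiTerm y n - 2 * ((eulerGamma : ℂ) + Complex.log y) * ∑' n, wigTerm y n =
      - ∫ v in Set.Ioi (0:ℝ), (trapW v : ℂ) * ∑' n, Dn y n v ∧
    ContinuousOn (fun v => ∑' n, Dn y n v) (Set.Ici 0) ∧
    IntegrableOn (fun v => ∑' n, Dn y n v) (Set.Ioi 0) := by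
  obtain ⟨C, hC, hb⟩ := D_bound y hy
  have c1 : ∀ n, Continuous fun v : ℝ => gOne (v + zN y n) + gOne (v - zN y n) :=
    fun n => line_cont gOne cont_gOne _ (zN_im y hy n).ne'
  have c2 : ∀ n, Continuous fun v : ℝ => gTwo (v + zN y n) + gTwo (v - zN y n) :=
    fun n => line_cont gTwo cont_gTwo _ (zN_im y hy n).ne'
  obtain ⟨s1, -, -, i1⟩ := series_int _ c1 C (fun n v hv => (hb n v hv).1)
  obtain ⟨s2, -, -, i2⟩ := series_int _ c2 C (fun n v hv => (hb n v hv).2)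
  obtain ⟨s3, h4, h5, -⟩ := series_int (Dn y) (fun n => (c2 n).add ((c1 n).const_mul _))
    (C + ‖(eulerGamma : ℂ) + Complex.log y‖ * C) (fun n v hv => by
      unfold Dn
      refine (norm_add_le _ _).trans ?_
      rw [norm_mul]
      have := mul_le_mul_of_nonneg_left (hb n v hv).1 (norm_nonneg ((eulerGamma : ℂ) + Complex.log y))
      have := (hb n v hv).2
      linarith)
  have w1 := s1.mul_left (1/2)
  simp only [← wigTerm_eq y hy] at w1
  have w2 := s2.neg
  simp only [← psiTerm_eq y hy] at w2
  refine ⟨w1.summable, w2.summable, ?_, h4, h5⟩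
  rw [w2.tsum_eq, w1.tsum_eq]
  have key := s2.add (s1.mul_left ((eulerGamma : ℂ) + Complex.log y))
  have : ∀ n, (∫ v in Set.Ioi (0:ℝ), (trapW v : ℂ) * (gTwo (v + zN y n) + gTwo (v - zN y n))) +
      ((eulerGamma : ℂ) + Complex.log y) *
        (∫ v in Set.Ioi (0:ℝ), (trapW v : ℂ) * (gOne (v + zN y n) + gOne (v - zN y n))) =
      ∫ v in Set.Ioi (0:ℝ), (trapW v : ℂ) * Dn y n v := by
    intro n
    rw [← integral_const_mul, ← integral_add (i2 n) ((i1 n).const_mul _)]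
    congr 1
    ext v
    unfold Dn
    ring
  simp only [this] at key
  rw [s3.unique key]
  ring


lemma sin_third (G : ℂ → ℂ) (hG : AnalyticAt ℂ G 0)
    (h : ∀ᶠ s in 𝓝 (0:ℂ), G s * Complex.sin (Real.pi * s) = Real.pi * s) (h0 : G 0 = 1) :
    deriv (deriv G) 0 = Real.pi ^ 2 / 3 := by
  have hp : (Real.pi : ℂ) ≠ 0 := by exact_mod_cast Real.pi_ne_zero
  have hS : ∀ s : ℂ, HasDerivAt (fun s => Complex.sin (Real.pi * s)) (Real.pi * Complex.cos (Real.pi * s)) s := by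
    intro s
    have := (Complex.hasDerivAt_sin (Real.pi * s)).comp s ((hasDerivAt_id s).const_mul (Real.pi:ℂ))
    refine this.congr_deriv ?_
    ring
  have hCs : ∀ s : ℂ, HasDerivAt (fun s => Complex.cos (Real.pi * s)) (-(Real.pi * Complex.sin (Real.pi * s))) s := by
    intro s
    have := (Complex.hasDerivAt_cos (Real.pi * s)).comp s ((hasDerivAt_id s).const_mul (Real.pi:ℂ))
    refine this.congr_deriv ?_
    ring
  have d0 : ∀ᶠ s in 𝓝 (0:ℂ), HasDerivAt G (deriv G s) s :=
    hG.eventually_analyticAt.mono fun s hs => hs.differentiableAt.hasDerivAt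
  have d1 : ∀ᶠ s in 𝓝 (0:ℂ), HasDerivAt (deriv G) (deriv (deriv G) s) s :=
    hG.deriv.eventually_analyticAt.mono fun s hs => hs.differentiableAt.hasDerivAt
  have d2 : ∀ᶠ s in 𝓝 (0:ℂ), HasDerivAt (deriv (deriv G)) (deriv (deriv (deriv G)) s) s :=
    hG.deriv.deriv.eventually_analyticAt.mono fun s hs => hs.differentiableAt.hasDerivAt
  have e1 : ∀ᶠ s in 𝓝 (0:ℂ), deriv G s * Complex.sin (Real.pi * s) +
      G s * (Real.pi * Complex.cos (Real.pi * s)) = Real.pi := by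
    filter_upwards [h.eventually_nhds, d0] with s hs hd
    have a1 := hd.mul (hS s)
    have a2 : HasDerivAt (fun s : ℂ => (Real.pi:ℂ) * s) Real.pi s := by
      simpa using (hasDerivAt_id s).const_mul (Real.pi:ℂ)
    exact a1.unique (a2.congr_of_eventuallyEq hs)
  have e2 : ∀ᶠ s in 𝓝 (0:ℂ), deriv (deriv G) s * Complex.sin (Real.pi * s) +
      2 * (deriv G s * (Real.pi * Complex.cos (Real.pi * s)))
      - G s * (Real.pi * (Real.pi * Complex.sin (Real.pi * s))) = 0 := by
    filter_upwards [e1.eventually_nhds, d0, d1] with s hs hd hd1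
    have a1 := (hd1.mul (hS s)).add (hd.mul ((hCs s).const_mul (Real.pi:ℂ)))
    have a2 := (hasDerivAt_const s (Real.pi:ℂ)).congr_of_eventuallyEq hs
    have := a1.unique a2
    rw [← this]
    ring
  have a1 := ((d2.self_of_nhds.mul (hS 0)).add ((d1.self_of_nhds.mul ((hCs 0).const_mul (Real.pi:ℂ))).const_mul 2)).sub
    (d0.self_of_nhds.mul (((hS 0).const_mul (Real.pi:ℂ)).const_mul (Real.pi:ℂ)))
  have a2 := (hasDerivAt_const (0:ℂ) (0:ℂ)).congr_of_eventuallyEq e2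
  have := a1.unique a2
  simp [h0] at this
  have h3 : (Real.pi:ℂ) * (3 * deriv (deriv G) 0 - Real.pi ^ 2) = 0 := by linear_combination this
  rcases mul_eq_zero.1 h3 with h4 | h4
  · exact absurd h4 hp
  · linear_combination h4 / 3

lemma gamma_diff (s : ℂ) (hs : 0 < s.re) : DifferentiableAt ℂ Complex.Gamma s := by
  apply Complex.differentiableAt_Gamma
  intro m h
  rw [h] at hs
  simp at hs
  linarith [Nat.cast_nonneg (α := ℝ) m]

lemma open_re : IsOpen {s : ℂ | 0 < s.re} := isOpen_lt continuous_const Complex.continuous_re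

lemma gamma_analytic (s : ℂ) (hs : 0 < s.re) : AnalyticAt ℂ Complex.Gamma s :=
  DifferentiableOn.analyticAt (s := {s : ℂ | 0 < s.re})
    (fun t ht => (gamma_diff t ht).differentiableWithinAt) (open_re.mem_nhds hs)

lemma gamma_deriv_one : deriv Complex.Gamma 1 = -(eulerGamma : ℂ) := Complex.hasDerivAt_Gamma_one.deriv

lemma gamma_deriv2_one : deriv (deriv Complex.Gamma) 1 = (eulerGamma : ℂ) ^ 2 + Real.pi ^ 2 / 6 := by
  set g := Complex.Gamma with hg
  have an1 : AnalyticAt ℂ g 1 := gamma_analytic 1 (by simp)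
  let G : ℂ → ℂ := fun s => g (1 + s) * g (1 - s)
  have hG : AnalyticAt ℂ G 0 := by
    apply AnalyticAt.mul
    · exact AnalyticAt.fun_comp (by simpa using an1) (by fun_prop)
    · exact AnalyticAt.fun_comp (by simpa using an1) (by fun_prop)
  have hnear : ∀ᶠ s in 𝓝 (0:ℂ), ‖s‖ < 1 := by
    have := Metric.ball_mem_nhds (0:ℂ) one_pos
    filter_upwards [this] with s hs
    simpa using hs
  have hk := sin_third G hG ?_ (by simp [G, hg])
  · have D0 : ∀ᶠ s in 𝓝 (1:ℂ), HasDerivAt g (deriv g s) s :=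
      an1.eventually_analyticAt.mono fun s hs => hs.differentiableAt.hasDerivAt
    have D1 : HasDerivAt (deriv g) (deriv (deriv g) 1) 1 := an1.deriv.differentiableAt.hasDerivAt
    have t1 : Tendsto (fun s : ℂ => 1 + s) (𝓝 0) (𝓝 1) := by
      have : Continuous fun s : ℂ => 1 + s := by fun_prop
      simpa using this.tendsto 0
    have t2 : Tendsto (fun s : ℂ => 1 - s) (𝓝 0) (𝓝 1) := by
      have : Continuous fun s : ℂ => 1 - s := by fun_prop
      simpa using this.tendsto 0
    have c1 : ∀ (f : ℂ → ℂ) (f' s : ℂ), HasDerivAt f f' (1 + s) → HasDerivAt (fun s => f (1 + s)) f' s :=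
      fun f f' s h => HasDerivAt.comp_const_add 1 s h
    have c2 : ∀ (f : ℂ → ℂ) (f' s : ℂ), HasDerivAt f f' (1 - s) → HasDerivAt (fun s => f (1 - s)) (-f') s :=
      fun f f' s h => HasDerivAt.comp_const_sub 1 s h
    have E : deriv G =ᶠ[𝓝 0] fun s => deriv g (1+s) * g (1-s) + g (1+s) * (-deriv g (1-s)) := by
      filter_upwards [t1.eventually D0, t2.eventually D0] with s h1 h2
      exact ((c1 _ _ _ h1).mul (c2 _ _ _ h2)).deriv
    have D0' := D0.self_of_nhds
    have E2 := (((c1 (deriv g) (deriv (deriv g) 1) 0 (by simpa using D1)).mul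
      (c2 g (deriv g 1) 0 (by simpa using D0'))).add
      ((c1 g (deriv g 1) 0 (by simpa using D0')).mul
      (c2 (deriv g) (deriv (deriv g) 1) 0 (by simpa using D1)).neg)).congr_of_eventuallyEq E
    rw [E2.deriv] at hk
    have hg1 : g 1 = 1 := by simp [hg]
    simp [hg1] at hk
    have hgd : deriv g 1 = -(eulerGamma : ℂ) := gamma_deriv_one
    rw [hgd] at hk
    linear_combination hk / 2
  · filter_upwards [hnear] with s hs
    by_cases h0 : s = 0
    · simp [h0]
    · have h1 := Complex.Gamma_mul_Gamma_one_sub s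
      have h2 := Complex.Gamma_add_one s h0
      have h3 : Complex.sin (Real.pi * s) ≠ 0 := by
        rw [Complex.sin_ne_zero_iff]
        intro k hk
        have hp : (Real.pi : ℂ) ≠ 0 := by exact_mod_cast Real.pi_ne_zero
        have : s = k := by
          apply mul_left_cancel₀ hp
          rw [hk]; ring
        rw [this] at hs h0
        simp at hs h0
        rw [← Int.cast_abs] at hs
        have : |k| < 1 := by exact_mod_cast hs
        exact h0 (Int.abs_lt_one_iff.1 this)
      simp only [G, hg]
      rw [add_comm 1 s, h2, mul_assoc s, h1]
      rw [mul_assoc, div_mul_cancel₀ _ h3, mul_comm]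


lemma laplace_hasDeriv (w : ℝ → ℂ) (hw : ∀ δ : ℝ, 0 < δ → IntegrableOn (fun u : ℝ => w u * Complex.exp (-(δ * u))) (Set.Ioi 0))
    (c : ℂ) (hc : 0 < c.re) :
    IntegrableOn (fun u : ℝ => w u * Complex.exp (-(c * u))) (Set.Ioi 0) ∧
    DifferentiableAt ℂ (fun c : ℂ => ∫ u in Set.Ioi (0:ℝ), w u * Complex.exp (-(c * u))) c := by
  have hwm : AEStronglyMeasurable w (volume.restrict (Set.Ioi 0)) := by
    have h1 := (hw 1 one_pos).aestronglyMeasurable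
    have h2 : AEStronglyMeasurable (fun u : ℝ => Complex.exp (u : ℂ)) (volume.restrict (Set.Ioi (0:ℝ))) :=
      Continuous.aestronglyMeasurable (by fun_prop)
    refine (h1.mul h2).congr (Eventually.of_forall fun u => ?_)
    simp only [Pi.mul_apply]
    rw [mul_assoc, ← Complex.exp_add]
    simp
  have hm : ∀ c : ℂ, AEStronglyMeasurable (fun u : ℝ => w u * Complex.exp (-(c * u))) (volume.restrict (Set.Ioi 0)) := by
    intro c
    exact hwm.mul (Continuous.aestronglyMeasurable (by fun_prop))
  have hi : ∀ c : ℂ, 0 < c.re → IntegrableOn (fun u : ℝ => w u * Complex.exp (-(c * u))) (Set.Ioi 0) := by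
    intro c hc
    refine Integrable.mono (hw c.re hc) (hm c) (Eventually.of_forall fun u => ?_)
    simp [Complex.norm_exp]
  refine ⟨hi c hc, ?_⟩
  have key := hasDerivAt_integral_of_dominated_loc_of_deriv_le
    (F := fun (c : ℂ) (u : ℝ) => w u * Complex.exp (-(c * u)))
    (F' := fun (c : ℂ) (u : ℝ) => w u * (Complex.exp (-(c * u)) * (-(u:ℂ))))
    (μ := volume.restrict (Set.Ioi (0:ℝ))) (x₀ := c) (s := Metric.ball c (c.re/2))
    (bound := fun u : ℝ => (4 / c.re) * ‖w u * Complex.exp (-(((c.re/4 : ℝ):ℂ) * u))‖)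
    (Metric.ball_mem_nhds c (by positivity))
    (Eventually.of_forall fun x => hm x) (hi c hc)
    (hwm.mul (Continuous.aestronglyMeasurable (by fun_prop)))
    ?_ ?_ ?_
  · exact key.2.differentiableAt
  · refine (ae_restrict_iff' measurableSet_Ioi).2 (Eventually.of_forall fun u hu x hx => ?_)
    have hu' : 0 < u := hu
    have hx' : c.re / 2 ≤ x.re := by
      have h1 := Complex.abs_re_le_norm (x - c)
      have h2 : ‖x - c‖ < c.re / 2 := by simpa [dist_eq_norm] using hx
      rw [Complex.sub_re] at h1
      have := abs_le.1 h1
      linarith [this.1]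
    rw [norm_mul, norm_mul, norm_mul, Complex.norm_exp, Complex.norm_exp, norm_neg, Complex.norm_real, Real.norm_of_nonneg hu'.le]
    have e1 : (-(x * (u:ℂ))).re = -(x.re * u) := by simp
    have e2 : (-(((c.re/4 : ℝ):ℂ) * u)).re = -(c.re/4*u) := by simp
    rw [e1, e2]
    have h3 : Real.exp (-(x.re*u)) * u ≤ 4 / c.re * Real.exp (-(c.re/4*u)) := by
      have h4 : c.re/4*u ≤ Real.exp (c.re/4*u) := by linarith [Real.add_one_le_exp (c.re/4*u)]
      have h5 : Real.exp (-(x.re*u)) ≤ Real.exp (-(c.re/4*u)) * Real.exp (-(c.re/4*u)) := by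
        rw [← Real.exp_add]; apply Real.exp_le_exp.2; nlinarith
      have h6 : u ≤ 4 / c.re * Real.exp (c.re/4*u) := by
        have : u = 4 / c.re * (c.re/4*u) := by field_simp
        calc u = 4 / c.re * (c.re/4*u) := this
          _ ≤ _ := mul_le_mul_of_nonneg_left h4 (by positivity)
      calc _ ≤ Real.exp (-(c.re/4*u)) * Real.exp (-(c.re/4*u)) * (4 / c.re * Real.exp (c.re/4*u)) := by gcongr
        _ = 4 / c.re * Real.exp (-(c.re/4*u)) * (Real.exp (-(c.re/4*u)) * Real.exp (c.re/4*u)) := by ring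
        _ = _ := by rw [← Real.exp_add]; simp
    calc ‖w u‖ * (Real.exp (-(x.re*u)) * u) ≤ ‖w u‖ * (4 / c.re * Real.exp (-(c.re/4*u))) := by gcongr
      _ = _ := by ring
  · exact (hw (c.re/4) (by positivity)).norm.const_mul _
  · refine Eventually.of_forall fun u x hx => ?_
    have h1 : HasDerivAt (fun x : ℂ => -(x * (u:ℂ))) (-(u:ℂ)) x := by
      simpa using ((hasDerivAt_id x).mul_const (u:ℂ)).fun_neg
    exact (h1.cexp).const_mul (w u)

lemma laplace_ext (w : ℝ → ℂ) (h : ℂ → ℂ) (hh : ∀ c : ℂ, 0 < c.re → DifferentiableAt ℂ h c)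
    (H : ∀ r : ℝ, 0 < r → IntegrableOn (fun u : ℝ => w u * Complex.exp (-(r * u))) (Set.Ioi 0) ∧
      ∫ u in Set.Ioi (0:ℝ), w u * Complex.exp (-(r * u)) = h r)
    (c : ℂ) (hc : 0 < c.re) :
    IntegrableOn (fun u : ℝ => w u * Complex.exp (-(c * u))) (Set.Ioi 0) ∧
      ∫ u in Set.Ioi (0:ℝ), w u * Complex.exp (-(c * u)) = h c := by
  have hw := fun δ hδ => (H δ hδ).1
  refine ⟨(laplace_hasDeriv w hw c hc).1, ?_⟩
  set F : ℂ → ℂ := fun c : ℂ => ∫ u in Set.Ioi (0:ℝ), w u * Complex.exp (-(c * u)) with hF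
  have a1 : AnalyticOnNhd ℂ F {s : ℂ | 0 < s.re} :=
    DifferentiableOn.analyticOnNhd (fun t ht => (laplace_hasDeriv w hw t ht).2.differentiableWithinAt) open_re
  have a2 : AnalyticOnNhd ℂ h {s : ℂ | 0 < s.re} :=
    DifferentiableOn.analyticOnNhd (fun t ht => (hh t ht).differentiableWithinAt) open_re
  have hpre : IsPreconnected {s : ℂ | 0 < s.re} := (convex_halfSpace_re_gt 0).isPreconnected
  have hfr : ∃ᶠ z in 𝓝[≠] (1:ℂ), F z = h z := by
    have ht : Tendsto (fun n : ℕ => ((1 + 1 / ((n:ℝ) + 1) : ℝ) : ℂ)) atTop (𝓝[≠] 1) := by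
      refine tendsto_nhdsWithin_iff.2 ⟨?_, Eventually.of_forall fun n => ?_⟩
      · have := (tendsto_one_div_add_atTop_nhds_zero_nat (𝕜 := ℝ)).const_add 1
        have := (Complex.continuous_ofReal.tendsto _).comp this
        simpa [Function.comp_def] using this
      · have : (0:ℝ) < 1 / ((n:ℝ)+1) := by positivity
        simp only [Set.mem_compl_iff, Set.mem_singleton_iff]
        intro h
        have : (1 + 1 / ((n:ℝ) + 1) : ℝ) = 1 := by exact_mod_cast h
        linarith
    refine ht.frequently (Eventually.frequently (Eventually.of_forall fun n => ?_))
    exact (H _ (by positivity)).2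
  exact a1.eqOn_of_preconnected_of_frequently_eq a2 hpre (by simp : (1:ℂ) ∈ {s : ℂ | 0 < s.re}) hfr hc

lemma mellin_exp (r : ℝ) (hr : 0 < r) (s : ℂ) (hs : 0 < s.re) :
    mellin (fun t : ℝ => Complex.exp (-(r * t))) s = Complex.exp (-s * Real.log r) * Complex.Gamma s := by
  have := Complex.integral_cpow_mul_exp_neg_mul_Ioi hs hr
  rw [mellin]
  simp only [smul_eq_mul]
  rw [this]
  congr 1
  have hr' : (r:ℂ) ≠ 0 := by exact_mod_cast hr.ne'
  rw [Complex.cpow_def_of_ne_zero (by simp [hr'])]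
  congr 1
  rw [one_div, ← Complex.ofReal_inv, ← Complex.ofReal_log (by positivity), Real.log_inv]
  push_cast; ring

lemma mellin_d1 (r : ℝ) (hr : 0 < r) (s : ℂ) (hs : 0 < s.re) :
    MellinConvergent (fun t : ℝ => Real.log t • Complex.exp (-(r * t))) s ∧
    mellin (fun t : ℝ => Real.log t • Complex.exp (-(r * t))) s =
      Complex.exp (-s * Real.log r) * (deriv Complex.Gamma s - Real.log r * Complex.Gamma s) := by
  have key := mellin_hasDerivAt_of_isBigO_rpow (a := s.re + 1) (b := 0) (s := s)
    (f := fun t : ℝ => Complex.exp (-(r * t))) ?_ ?_ (by linarith) ?_ hs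
  · refine ⟨key.1, ?_⟩
    have h1 : HasDerivAt (fun s : ℂ => -s * (Real.log r:ℂ)) (-(Real.log r:ℂ)) s := by
      simpa using ((hasDerivAt_id s).neg.mul_const (Real.log r:ℂ))
    have h2 := (h1.cexp).mul (gamma_diff s hs).hasDerivAt
    have h3 : (fun s : ℂ => Complex.exp (-s * Real.log r) * Complex.Gamma s) =ᶠ[𝓝 s] mellin (fun t : ℝ => Complex.exp (-(r * t))) := by
      filter_upwards [open_re.mem_nhds hs] with t ht
      exact (mellin_exp r hr t ht).symm
    have := key.2.unique (h2.congr_of_eventuallyEq h3.symm)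
    rw [this]; ring
  · exact ContinuousOn.locallyIntegrableOn (Continuous.continuousOn (by fun_prop)) measurableSet_Ioi
  · rw [← Asymptotics.isBigO_norm_left]
    simp_rw [Complex.norm_exp]
    simpa using (isLittleO_exp_neg_mul_rpow_atTop hr (-(s.re+1))).isBigO
  · simp only [neg_zero, Real.rpow_zero]
    have : Continuous (fun t : ℝ => Complex.exp (-(r * t))) := by fun_prop
    exact ((this.tendsto 0).mono_left nhdsWithin_le_nhds).isBigO_one ℝ

lemma mellin_d2 (r : ℝ) (hr : 0 < r) :
    MellinConvergent (fun t : ℝ => Real.log t • (Real.log t • Complex.exp (-(r * t)))) 1 ∧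
    mellin (fun t : ℝ => Real.log t • (Real.log t • Complex.exp (-(r * t)))) 1 =
      Complex.exp (-(Real.log r)) * ((eulerGamma : ℂ) ^ 2 + Real.pi ^ 2 / 6 + 2 * eulerGamma * Real.log r + Real.log r ^ 2) := by
  have key := mellin_hasDerivAt_of_isBigO_rpow (a := 2) (b := 1/2) (s := 1)
    (f := fun t : ℝ => Real.log t • Complex.exp (-(r * t))) ?_ ?_ (by simp) ?_ (by norm_num)
  · refine ⟨key.1, ?_⟩
    have h1 : HasDerivAt (fun s : ℂ => -s * (Real.log r:ℂ)) (-(Real.log r:ℂ)) 1 := by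
      simpa using ((hasDerivAt_id (1:ℂ)).neg.mul_const (Real.log r:ℂ))
    have hd := (gamma_analytic 1 (by simp)).deriv.differentiableAt.hasDerivAt
    have h2 := (h1.cexp).mul (hd.sub ((gamma_diff 1 (by simp)).hasDerivAt.const_mul (Real.log r:ℂ)))
    have h3 : (fun s : ℂ => Complex.exp (-s * Real.log r) * (deriv Complex.Gamma s - Real.log r * Complex.Gamma s)) =ᶠ[𝓝 1]
        mellin (fun t : ℝ => Real.log t • Complex.exp (-(r * t))) := by
      filter_upwards [open_re.mem_nhds (by simp : (1:ℂ) ∈ {s : ℂ | 0 < s.re})] with t ht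
      exact (mellin_d1 r hr t ht).2.symm
    have := key.2.unique (h2.congr_of_eventuallyEq h3.symm)
    rw [this, gamma_deriv2_one, gamma_deriv_one]
    simp only [Pi.sub_apply, gamma_deriv_one, Complex.Gamma_one]
    ring_nf
  · refine ContinuousOn.locallyIntegrableOn ?_ measurableSet_Ioi
    apply ContinuousOn.fun_smul
    · exact Real.continuousOn_log.mono fun x hx => by simpa using (ne_of_gt hx)
    · exact Continuous.continuousOn (by fun_prop)
  · have h1 : (fun t : ℝ => Complex.exp (-(r * t))) =O[atTop] fun x : ℝ => x ^ (-3:ℝ) := by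
      rw [← Asymptotics.isBigO_norm_left]
      simp_rw [Complex.norm_exp]
      simpa using (isLittleO_exp_neg_mul_rpow_atTop hr (-3)).isBigO
    have h2 := (isLittleO_log_rpow_atTop (one_pos)).isBigO.smul h1
    refine h2.trans_eventuallyEq ?_
    filter_upwards [eventually_gt_atTop 0] with x hx
    rw [smul_eq_mul, ← Real.rpow_add hx]; norm_num
  · have : Continuous (fun t : ℝ => Complex.exp (-(r * t))) := by fun_prop
    have h1 := ((this.tendsto 0).mono_left (nhdsWithin_le_nhds (s := Set.Ioi 0))).isBigO_one ℝ
    have h2 := (isLittleO_log_rpow_nhdsGT_zero (r := -(1/2)) (by norm_num)).isBigO.smul h1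
    simpa using h2

lemma lap_log (c : ℂ) (hc : 0 < c.re) :
    IntegrableOn (fun u : ℝ => (Real.log u : ℂ) * Complex.exp (-(c * u))) (Set.Ioi 0) ∧
    ∫ u in Set.Ioi (0:ℝ), (Real.log u : ℂ) * Complex.exp (-(c * u)) = -(eulerGamma + Complex.log c) / c := by
  refine laplace_ext (fun u => (Real.log u : ℂ)) (fun c => -(eulerGamma + Complex.log c) / c) ?_ ?_ c hc
  · intro c hc
    have h1 : c ∈ Complex.slitPlane := Or.inl hc
    have h2 := re_pos_ne c hc
    fun_prop (disch := assumption)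
  · intro r hr
    have h := mellin_d1 r hr 1 (by simp)
    simp only [MellinConvergent, mellin, sub_self, Complex.cpow_zero, one_smul, Complex.real_smul] at h
    refine ⟨h.1, h.2.trans ?_⟩
    rw [gamma_deriv_one, Complex.Gamma_one, neg_one_mul, Complex.exp_neg, ← Complex.ofReal_exp, Real.exp_log hr, ← Complex.ofReal_log hr.le]
    ring

lemma lap_log2 (c : ℂ) (hc : 0 < c.re) :
    IntegrableOn (fun u : ℝ => ((Real.log u)^2 : ℂ) * Complex.exp (-(c * u))) (Set.Ioi 0) ∧
    ∫ u in Set.Ioi (0:ℝ), ((Real.log u)^2 : ℂ) * Complex.exp (-(c * u)) =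
      ((eulerGamma : ℂ) ^ 2 + Real.pi ^ 2 / 6 + 2 * eulerGamma * Complex.log c + Complex.log c ^ 2) / c := by
  refine laplace_ext (fun u => ((Real.log u)^2 : ℂ)) (fun c => ((eulerGamma : ℂ) ^ 2 + Real.pi ^ 2 / 6 + 2 * eulerGamma * Complex.log c + Complex.log c ^ 2) / c) ?_ ?_ c hc
  · intro c hc
    have h1 : c ∈ Complex.slitPlane := Or.inl hc
    have h2 := re_pos_ne c hc
    fun_prop (disch := assumption)
  · intro r hr
    have h := mellin_d2 r hr
    simp only [MellinConvergent, mellin, sub_self, Complex.cpow_zero, one_smul, Complex.real_smul, ← mul_assoc, ← pow_two] at h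
    refine ⟨h.1, h.2.trans ?_⟩
    rw [Complex.exp_neg, ← Complex.ofReal_exp, Real.exp_log hr, ← Complex.ofReal_log hr.le]
    ring

lemma lap_sqlog (c : ℂ) (hc : 0 < c.re) :
    IntegrableOn (fun u : ℝ => ((u:ℂ)^2 * Real.log u : ℂ) * Complex.exp (-(c * u))) (Set.Ioi 0) ∧
    ∫ u in Set.Ioi (0:ℝ), ((u:ℂ)^2 * Real.log u : ℂ) * Complex.exp (-(c * u)) =
      (3 - 2 * eulerGamma - 2 * Complex.log c) / c ^ 3 := by
  refine laplace_ext (fun u => ((u:ℂ)^2 * Real.log u : ℂ)) (fun c => (3 - 2 * eulerGamma - 2 * Complex.log c) / c ^ 3) ?_ ?_ c hc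
  · intro c hc
    have h1 : c ∈ Complex.slitPlane := Or.inl hc
    have h2 := pow_ne_zero 3 (re_pos_ne c hc)
    fun_prop (disch := assumption)
  · intro r hr
    have h := mellin_d1 r hr 3 (by simp)
    have e : (3:ℂ) - 1 = ((2:ℕ):ℂ) := by norm_num
    simp only [MellinConvergent, mellin, e, Complex.cpow_natCast, smul_eq_mul, Complex.real_smul, ← mul_assoc] at h
    refine ⟨h.1, h.2.trans ?_⟩
    have d := (Complex.hasDerivAt_Gamma_nat 2).deriv
    have e3 : ((2:ℕ):ℂ) + 1 = 3 := by norm_num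
    have g3 : Complex.Gamma 3 = 2 := by
      have := Complex.Gamma_nat_eq_factorial 2
      rw [e3] at this; rw [this]; norm_num
    rw [e3] at d
    have hh : (harmonic 2 : ℂ) = 3/2 := by norm_num [harmonic, Finset.sum_range_succ]
    rw [d, g3, hh, ← Complex.ofReal_log hr.le]
    have e4 : Complex.exp (-3 * (Real.log r : ℂ)) = 1 / (r:ℂ)^3 := by
      rw [show -3 * (Real.log r:ℂ) = -(((3:ℕ):ℂ) * (Real.log r:ℂ)) by push_cast; ring, Complex.exp_neg, Complex.exp_nat_mul, ← Complex.ofReal_exp, Real.exp_log hr]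
      simp
    rw [e4]
    simp only [Nat.factorial, eulerGamma]
    push_cast
    ring


noncomputable def lamTwo (c : ℂ) : ℂ := (3 - 2 * (eulerGamma : ℂ) - 2 * Complex.log c) / c ^ 3

lemma lamTwo_eq (c : ℂ) : lamTwo c = -(gTwo c + eulerGamma * gOne c) := by
  simp only [lamTwo, gTwo, gOne]; ring

noncomputable def qfun (c : ℂ) (u : ℝ) : ℂ :=
  ((max u 0 * (max u 0 * Real.log (max u 0)) : ℝ) : ℂ) * Complex.exp (-(c * u))

lemma qfun_cont (c : ℂ) : Continuous (qfun c) := by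
  have h : Continuous fun u : ℝ => max u 0 * (max u 0 * Real.log (max u 0)) :=
    (continuous_id.max continuous_const).mul (Real.continuous_mul_log.comp (continuous_id.max continuous_const))
  have := Complex.continuous_ofReal.comp h
  exact this.mul (by fun_prop)

lemma qfun_pos (c : ℂ) (u : ℝ) (hu : 0 ≤ u) : qfun c u = ((u:ℂ)^2 * Real.log u) * Complex.exp (-(c * u)) := by
  simp only [qfun, max_eq_left hu]; push_cast; ring

lemma qfun_neg (c : ℂ) (u : ℝ) (hu : u ≤ 0) : qfun c u = 0 := by
  simp [qfun, max_eq_right hu]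

lemma qfun_decay (c : ℂ) (hc : 0 < c.re) :
    (qfun c) =O[cocompact ℝ] fun x : ℝ => |x| ^ (-(5/2:ℝ)) := by
  rw [cocompact_eq_atBot_atTop, Asymptotics.isBigO_sup]
  constructor
  · have : qfun c =ᶠ[atBot] fun _ => 0 := by
      filter_upwards [eventually_le_atBot 0] with u hu using qfun_neg c u hu
    exact this.trans_isBigO (Asymptotics.isBigO_zero _ _)
  · have h1 : (fun t : ℝ => Complex.exp (-(c * t))) =O[atTop] fun x : ℝ => x ^ (-(11/2):ℝ) := by
      rw [← Asymptotics.isBigO_norm_left]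
      simp_rw [Complex.norm_exp]
      simpa using (isLittleO_exp_neg_mul_rpow_atTop hc (-(11/2))).isBigO
    have h2 := ((isLittleO_log_rpow_atTop (one_pos)).isBigO)
    have h3 : (fun x : ℝ => (x:ℂ)^2) =O[atTop] fun x : ℝ => x^2 := by
      rw [← Asymptotics.isBigO_norm_left]
      refine Asymptotics.isBigO_of_le _ fun x => by simp
    have h2' : (fun x : ℝ => (Real.log x : ℂ)) =O[atTop] fun x : ℝ => x ^ (1:ℝ) := by
      rw [← Asymptotics.isBigO_norm_left]
      refine Asymptotics.IsBigO.trans (Asymptotics.isBigO_of_le _ fun x => by simp) h2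
    have h4 := (h3.mul h2').mul h1
    refine Asymptotics.IsBigO.congr' h4 ?_ ?_
    · filter_upwards [eventually_ge_atTop 0] with u hu using (qfun_pos c u hu).symm
    · filter_upwards [eventually_gt_atTop 0] with u hu
      rw [abs_of_pos hu, ← Real.rpow_natCast, ← Real.rpow_add hu, ← Real.rpow_add hu]
      norm_num

lemma qfun_fourier (c : ℂ) (hc : 0 < c.re) (ξ : ℝ) :
    FourierTransform.fourier (qfun c) ξ = lamTwo (c + 2 * Real.pi * Complex.I * ξ) := by
  have hc' : 0 < (c + 2 * Real.pi * Complex.I * ξ).re := by simpa using hc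
  rw [Real.fourier_real_eq_integral_exp_smul, lamTwo, ← (lap_sqlog _ hc').2, ← integral_indicator measurableSet_Ioi]
  congr 1
  ext u
  by_cases hu : 0 < u
  · rw [Set.indicator_of_mem (by exact hu), qfun_pos c u hu.le, smul_eq_mul, mul_left_comm, ← Complex.exp_add]
    congr 2
    push_cast; ring
  · rw [Set.indicator_of_notMem (by simpa using hu), qfun_neg c u (by simpa using hu), smul_zero]

lemma lamTwo_decay (c : ℂ) (hc : 0 < c.re) :
    (fun ξ : ℝ => lamTwo (c + 2 * Real.pi * Complex.I * ξ)) =O[cocompact ℝ] fun x : ℝ => |x| ^ (-(5/2:ℝ)) := by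
  obtain ⟨C, hC, hb⟩ := g_bounds c.re hc
  refine Asymptotics.IsBigO.of_bound (C + |eulerGamma| * C) ?_
  have h1 : ∀ᶠ ξ : ℝ in cocompact ℝ, |c.im| + 1 ≤ ‖ξ‖ := (tendsto_norm_cocompact_atTop).eventually_ge_atTop _
  filter_upwards [h1] with ξ hξ
  rw [Real.norm_eq_abs] at hξ
  set s := c + 2 * Real.pi * Complex.I * ξ with hs
  have hre : s.re = c.re := by simp [hs]
  have him : s.im = c.im + 2 * Real.pi * ξ := by simp [hs]
  have hn : c.re ≤ ‖s‖ := by rw [← hre]; exact Complex.re_le_norm s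
  have hn2 : |ξ| ≤ ‖s‖ := by
    refine le_trans ?_ (Complex.abs_im_le_norm s)
    rw [him]
    have a1 := abs_sub_abs_le_abs_sub (2 * Real.pi * ξ) (-c.im)
    rw [abs_mul, abs_of_pos Real.two_pi_pos, abs_neg, sub_neg_eq_add, add_comm (2 * Real.pi * ξ)] at a1
    nlinarith [Real.pi_gt_three, abs_nonneg c.im]
  obtain ⟨b1, b2, -⟩ := hb s hn
  have hpos : 0 < |ξ| := by linarith [abs_nonneg c.im]
  have h5 : ‖s‖ ^ (-(5/2:ℝ)) ≤ |ξ| ^ (-(5/2:ℝ)) := Real.rpow_le_rpow_of_nonpos hpos hn2 (by norm_num)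
  rw [lamTwo_eq, norm_neg, Real.norm_of_nonneg (by positivity)]
  calc _ ≤ ‖gTwo s‖ + ‖(eulerGamma : ℂ) * gOne s‖ := norm_add_le _ _
    _ ≤ C * ‖s‖ ^ (-(5/2:ℝ)) + |eulerGamma| * (C * ‖s‖ ^ (-(5/2:ℝ))) := by
      rw [norm_mul, Complex.norm_real, Real.norm_eq_abs]; gcongr
    _ = (C + |eulerGamma| * C) * ‖s‖ ^ (-(5/2:ℝ)) := by ring
    _ ≤ _ := by gcongr

lemma poisson_Z (c : ℂ) (hc : 0 < c.re) :
    ∑' n : ℤ, qfun c (n:ℝ) = ∑' n : ℤ, lamTwo (c + 2 * Real.pi * Complex.I * ((n:ℝ):ℂ)) := by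
  have hd := lamTwo_decay c hc
  have P := Real.tsum_eq_tsum_fourier_of_rpow_decay (qfun_cont c) (b := 5/2) (by norm_num) (qfun_decay c hc)
    (by rw [funext (qfun_fourier c hc)]; exact hd) 0
  have e1 : ∀ n : ℤ, qfun c (0 + (n:ℝ)) = qfun c (n:ℝ) := fun n => by rw [zero_add]
  have e2 : ∀ n : ℤ, FourierTransform.fourier (qfun c) (n:ℝ) * (fourier n) ((0:ℝ) : UnitAddCircle)
      = lamTwo (c + 2 * Real.pi * Complex.I * ((n:ℝ):ℂ)) := by
    intro n
    rw [qfun_fourier c hc, AddCircle.coe_zero, fourier_eval_zero, mul_one]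
  rw [tsum_congr e1, tsum_congr e2] at P
  exact P

lemma q_Z (c : ℂ) : ∑' n : ℤ, qfun c (n:ℝ) = ∑' k : ℕ, ((k:ℂ)^2 * Real.log k) * Complex.exp (-(c * k)) := by
  rw [← Function.Injective.tsum_eq (g := fun k : ℕ => (k : ℤ)) Nat.cast_injective]
  · refine tsum_congr fun k => ?_
    rw [qfun_pos c _ (by positivity)]
    simp
  · intro n hn
    by_contra h
    apply hn
    show qfun c (n:ℝ) = 0
    apply qfun_neg
    have : n < 0 := by
      by_contra h'
      exact h ⟨n.toNat, by simp; omega⟩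
    exact_mod_cast this.le

lemma lam_Z (f : ℤ → ℂ) (hsm : Summable f) :
    ∑' n : ℤ, f n = f 0 + ∑' n : ℕ, (f ((n:ℤ) + 1) + f (-((n:ℤ) + 1))) := by
  have s1 : Summable (fun n : ℕ => f (n:ℤ)) := hsm.comp_injective (i := fun n : ℕ => (n:ℤ)) Nat.cast_injective
  have s2 : Summable (fun n : ℕ => f (-((n:ℤ)+1))) := hsm.comp_injective (i := fun n : ℕ => -((n:ℤ)+1)) (fun a b h => by simpa using h)
  rw [tsum_of_nat_of_neg_add_one s1 s2]
  rw [Summable.tsum_eq_zero_add s1]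
  have s3 := (summable_nat_add_iff 1).2 s1
  rw [add_assoc]
  congr 1
  rw [← Summable.tsum_add s3 s2]
  rfl

lemma poisson (c : ℂ) (hc : 0 < c.re) :
    ∑' k : ℕ, ((k:ℂ)^2 * Real.log k) * Complex.exp (-(c * k)) =
      lamTwo c + ∑' n : ℕ, (lamTwo (c + 2 * Real.pi * Complex.I * ((n:ℂ) + 1)) + lamTwo (c - 2 * Real.pi * Complex.I * ((n:ℂ) + 1))) := by
  have hsm : Summable fun n : ℤ => lamTwo (c + 2 * Real.pi * Complex.I * ((n:ℝ):ℂ)) :=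
    summable_of_isBigO (Real.summable_abs_int_rpow (b := 5/2) (by norm_num)) ((lamTwo_decay c hc).comp_tendsto Int.tendsto_coe_cofinite)
  rw [← q_Z, poisson_Z c hc, lam_Z _ hsm]
  congr 1
  · simp
  · refine tsum_congr fun n => ?_
    push_cast
    congr 2
    ring

lemma log_scale (y s : ℂ) (hy : 0 < y.re) (hs : 0 < (y * s).re) :
    Complex.log (y * s) = Complex.log y + Complex.log s := by
  have hy0 := re_pos_ne y hy
  have hys := re_pos_ne _ hs
  have a1 := Complex.abs_arg_lt_pi_div_two_iff.2 (Or.inl hy)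
  have a2 := Complex.abs_arg_lt_pi_div_two_iff.2 (Or.inl hs)
  have a3 : y⁻¹.arg = -y.arg := by
    rw [Complex.arg_inv, if_neg]
    intro h
    rw [h, abs_of_pos Real.pi_pos] at a1
    linarith [Real.pi_pos]
  have hli : Complex.log y⁻¹ = -Complex.log y := by
    apply Complex.log_inv
    intro h
    rw [h, abs_of_pos Real.pi_pos] at a1
    linarith [Real.pi_pos]
  rw [abs_lt] at a1 a2
  have h := Complex.log_mul (x := y * s) (y := y⁻¹) hys (inv_ne_zero hy0) (by
    rw [a3]; constructor <;> linarith [a1.1, a1.2, a2.1, a2.2])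
  rw [hli, show y * s * y⁻¹ = s by field_simp] at h
  rw [h]; ring

lemma lamTwo_scale (y s : ℂ) (hy : 0 < y.re) (hs : 0 < (y * s).re) :
    gTwo s + (eulerGamma + Complex.log y) * gOne s = - y^3 * lamTwo (y * s) := by
  have hy0 := re_pos_ne y hy
  have hs0 : s ≠ 0 := fun h => by simp [h] at hs
  simp only [gTwo, gOne, lamTwo]
  rw [log_scale y s hy hs]
  field_simp
  ring

lemma S_eq (y : ℂ) (hy : 0 < y.re) (v : ℝ) (hv : 0 < v) :
    ∑' n, Dn y n v = - y^3 * (∑' k : ℕ, ((k:ℂ)^2 * Real.log k) * Complex.exp (-(y * v * k)) - lamTwo (y * v)) := by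
  have hc : 0 < (y * v).re := by simpa using mul_pos hy hv
  have hy0 := re_pos_ne y hy
  rw [poisson (y * v) hc, add_sub_cancel_left, ← tsum_mul_left]
  refine tsum_congr fun n => ?_
  have e1 : y * v + 2 * Real.pi * Complex.I * ((n:ℂ) + 1) = y * (v + zN y n) := by
    simp only [zN]; field_simp
  have e2 : y * v - 2 * Real.pi * Complex.I * ((n:ℂ) + 1) = y * (v - zN y n) := by
    simp only [zN]; field_simp
  have r1 : 0 < (y * (v + zN y n)).re := by rw [← e1]; simpa using mul_pos hy hv
  have r2 : 0 < (y * (v - zN y n)).re := by rw [← e2]; simpa using mul_pos hy hv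
  rw [e1, e2, mul_add, ← lamTwo_scale y _ hy r1, ← lamTwo_scale y _ hy r2, Dn]
  ring


def GoodSeq (b : ℕ → ℂ) : Prop := ∀ δ : ℝ, 0 < δ → Summable fun j : ℕ => ‖b j‖ * Real.exp (-(δ * j))

lemma good_one : GoodSeq (fun _ => 1) := by
  intro δ hδ
  have : Summable fun j : ℕ => (Real.exp (-δ)) ^ j :=
    summable_geometric_of_lt_one (Real.exp_pos _).le (Real.exp_lt_one_iff.2 (by linarith))
  refine this.congr fun j => ?_
  rw [← Real.exp_nat_mul]; simp [mul_comm]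

lemma GoodSeq.mono {b c : ℕ → ℂ} (hb : GoodSeq b) (h : ∀ j, ‖c j‖ ≤ ‖b j‖) : GoodSeq c := by
  intro δ hδ
  refine (hb δ hδ).of_nonneg_of_le (fun j => by positivity) fun j => ?_
  gcongr
  exact h j

lemma GoodSeq.mul_nat {b : ℕ → ℂ} (hb : GoodSeq b) (a : ℂ) : GoodSeq (fun j => (-(a * j)) * b j) := by
  intro δ hδ
  refine ((hb (δ/2) (by positivity)).mul_left (‖a‖ * (2/δ))).of_nonneg_of_le (fun j => by positivity) fun j => ?_
  rw [norm_mul, norm_neg, norm_mul, Complex.norm_natCast]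
  have h1 : (j:ℝ) ≤ 2/δ * Real.exp (δ/2 * j) := by
    have := Real.add_one_le_exp (δ/2*j)
    calc (j:ℝ) = 2/δ * (δ/2*j) := by field_simp
      _ ≤ _ := by gcongr; linarith
  have h2 : Real.exp (-(δ * j)) = Real.exp (-(δ/2*j)) * Real.exp (-(δ/2*j)) := by
    rw [← Real.exp_add]; congr 1; ring
  have h3 : Real.exp (δ/2*j) * Real.exp (-(δ/2*j)) = 1 := by rw [← Real.exp_add]; simp
  calc ‖a‖ * (j:ℝ) * ‖b j‖ * Real.exp (-(δ * j)) ≤ ‖a‖ * (2/δ * Real.exp (δ/2 * j)) * ‖b j‖ * Real.exp (-(δ * j)) := by gcongr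
    _ = ‖a‖ * (2/δ) * (‖b j‖ * Real.exp (-(δ/2*j))) * (Real.exp (δ/2*j) * Real.exp (-(δ/2*j))) := by rw [h2]; ring
    _ = _ := by rw [h3, mul_one]

lemma GoodSeq.norm_term (b : ℕ → ℂ) (y : ℂ) (v : ℝ) (j : ℕ) :
    ‖b j * Complex.exp (-(y * v * j))‖ = ‖b j‖ * Real.exp (-(y.re * v * j)) := by
  rw [norm_mul, Complex.norm_exp]; simp

lemma GoodSeq.summable {b : ℕ → ℂ} (hb : GoodSeq b) (y : ℂ) (hy : 0 < y.re) (v : ℝ) (hv : 0 < v) :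
    Summable fun j : ℕ => b j * Complex.exp (-(y * v * j)) := by
  apply Summable.of_norm
  refine (hb (y.re * v) (by positivity)).congr fun j => ?_
  rw [GoodSeq.norm_term]

lemma ser_hasDeriv {b : ℕ → ℂ} (hb : GoodSeq b) (y : ℂ) (hy : 0 < y.re) (v : ℝ) (hv : 0 < v) :
    HasDerivAt (fun v : ℝ => ∑' j : ℕ, b j * Complex.exp (-(y * v * j)))
      (∑' j : ℕ, ((-(y * j)) * b j) * Complex.exp (-(y * v * j))) v := by
  have hv2 : v / 2 < v := by linarith
  refine hasDerivAt_tsum_of_isPreconnected (t := Set.Ioi (v/2)) (y₀ := v)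
    (g := fun (j : ℕ) (v : ℝ) => b j * Complex.exp (-(y * v * j)))
    (g' := fun (j : ℕ) (v : ℝ) => ((-(y * j)) * b j) * Complex.exp (-(y * v * j)))
    (hb.mul_nat y (y.re * (v/2)) (by positivity)) isOpen_Ioi isPreconnected_Ioi ?_ ?_ hv2 (hb.summable y hy v hv) hv2
  · intro j x hx
    have h1 : HasDerivAt (fun x : ℝ => -(y * x * j)) (-(y * j)) x := by
      have := (((Complex.ofRealCLM.hasDerivAt (x := x)).const_mul y).mul_const (j:ℂ)).fun_neg
      simpa using this
    have := (h1.cexp).const_mul (b j)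
    refine this.congr_deriv ?_
    ring
  · intro j x hx
    rw [GoodSeq.norm_term (fun j => -(y*j) * b j)]
    have hx' : v/2 < x := hx
    gcongr

lemma good_log : GoodSeq (fun j => (Real.log j : ℂ)) := by
  refine (good_one.mul_nat 1).mono fun j => ?_
  simp only [one_mul, mul_one, norm_neg, Complex.norm_natCast, Complex.norm_real]
  rw [Real.norm_of_nonneg (Real.log_natCast_nonneg j)]
  rcases Nat.eq_zero_or_pos j with h | h
  · simp [h]
  · have : (0:ℝ) < j := by exact_mod_cast h
    linarith [Real.log_le_sub_one_of_pos this]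

lemma good_logdiv : GoodSeq (fun j => (Real.log j : ℂ) / j) := by
  refine good_log.mono fun j => ?_
  rw [norm_div, Complex.norm_natCast]
  rcases Nat.eq_zero_or_pos j with h | h
  · simp [h]
  · have : (1:ℝ) ≤ j := by exact_mod_cast h
    exact div_le_self (norm_nonneg _) this

noncomputable def PsiF (y : ℂ) (v : ℝ) : ℂ :=
  ∑' j : ℕ, (Real.log j : ℂ) * Complex.exp (-(y * v * j)) + (eulerGamma + Complex.log (y * v)) / (y * v)

noncomputable def PsiD (y : ℂ) (v : ℝ) : ℂ :=
  ∑' j : ℕ, ((-(y * j)) * (Real.log j : ℂ)) * Complex.exp (-(y * v * j)) + y * ((1 - eulerGamma - Complex.log (y * v)) / (y * v) ^ 2)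

noncomputable def PsiA (y : ℂ) (v : ℝ) : ℂ :=
  -∑' j : ℕ, ((Real.log j : ℂ) / j) * Complex.exp (-(y * v * j)) + eulerGamma * Complex.log (y * v) + (1/2) * Complex.log (y * v) ^ 2

lemma hd_line (y : ℂ) (v : ℝ) : HasDerivAt (fun v : ℝ => y * (v:ℂ)) y v := by
  simpa using (Complex.ofRealCLM.hasDerivAt (x := v)).const_mul y

lemma re_line (y : ℂ) (hy : 0 < y.re) (v : ℝ) (hv : 0 < v) : 0 < (y * v).re := by
  simpa using mul_pos hy hv

lemma hd_logline (y : ℂ) (hy : 0 < y.re) (v : ℝ) (hv : 0 < v) :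
    HasDerivAt (fun v : ℝ => Complex.log (y * v)) (y / (y * v)) v := 
  (hd_line y v).clog_real (Or.inl (re_line y hy v hv))

lemma PsiF_hd (y : ℂ) (hy : 0 < y.re) (v : ℝ) (hv : 0 < v) : HasDerivAt (PsiF y) (PsiD y v) v := by
  have h0 := re_pos_ne _ (re_line y hy v hv)
  have hy0 := re_pos_ne y hy
  have hv0 : (v:ℂ) ≠ 0 := by exact_mod_cast hv.ne'
  have h1 := ser_hasDeriv good_log y hy v hv
  have h2 := ((hd_logline y hy v hv).const_add (eulerGamma:ℂ)).div (hd_line y v) h0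
  refine (h1.add h2).congr_deriv ?_
  rw [PsiD]
  congr 1
  field_simp
  ring

lemma PsiD_hd (y : ℂ) (hy : 0 < y.re) (v : ℝ) (hv : 0 < v) :
    HasDerivAt (PsiD y) (-(1 / y) * ∑' n, Dn y n v) v := by
  have h0 := re_pos_ne _ (re_line y hy v hv)
  have hy0 := re_pos_ne y hy
  have hv0 : (v:ℂ) ≠ 0 := by exact_mod_cast hv.ne'
  have h1 := ser_hasDeriv (good_log.mul_nat y) y hy v hv
  have h2 := ((((hd_logline y hy v hv).const_sub (1 - (eulerGamma:ℂ))).div ((hd_line y v).pow 2) (pow_ne_zero 2 h0))).const_mul y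
  refine (h1.add h2).congr_deriv ?_
  rw [S_eq y hy v hv]
  have e : ∑' (j : ℕ), -(y * ↑j) * (-(y * ↑j) * (Real.log j:ℂ)) * Complex.exp (-(y * ↑v * ↑j)) =
      y^2 * ∑' k : ℕ, ((k:ℂ)^2 * Real.log k) * Complex.exp (-(y * v * k)) := by
    rw [← tsum_mul_left]
    refine tsum_congr fun j => ?_
    ring
  rw [e, lamTwo]
  simp only [Pi.pow_apply]
  field_simp
  ring

lemma PsiA_hd (y : ℂ) (hy : 0 < y.re) (v : ℝ) (hv : 0 < v) : HasDerivAt (PsiA y) (y * PsiF y v) v := by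
  have h0 := re_pos_ne _ (re_line y hy v hv)
  have hy0 := re_pos_ne y hy
  have hv0 : (v:ℂ) ≠ 0 := by exact_mod_cast hv.ne'
  have h1 := (ser_hasDeriv good_logdiv y hy v hv).neg
  have h2 := (hd_logline y hy v hv).const_mul (eulerGamma:ℂ)
  have h3 := ((hd_logline y hy v hv).pow 2).const_mul (1/2:ℂ)
  refine ((h1.add h2).add h3).congr_deriv ?_
  rw [PsiF]
  have e : ∑' (j : ℕ), -(y * ↑j) * ((Real.log j:ℂ) / j) * Complex.exp (-(y * ↑v * ↑j)) =
      -y * ∑' j : ℕ, (Real.log j : ℂ) * Complex.exp (-(y * v * j)) := by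
    rw [← tsum_mul_left]
    refine tsum_congr fun j => ?_
    rcases Nat.eq_zero_or_pos j with h | h
    · simp [h]
    · have : (j:ℂ) ≠ 0 := by exact_mod_cast h.ne'
      field_simp
  rw [e]
  field_simp
  ring


lemma sum_shift (f : ℝ → ℂ) (f0 : f 0 = 0) (f1 : f 1 = 0) (n : ℕ) :
    ∑ k ∈ Finset.range n, 1 / 2 * (f ((1 + k : ℕ):ℝ) + f (((1 + k : ℕ):ℝ) + 1)) =
      ∑ k ∈ Finset.range (n+2), f (k:ℝ) - 1/2 * f ((1 + n : ℕ):ℝ) := by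
  rw [trap_sum_form, Finset.sum_range_succ' _ (n+1), Finset.sum_range_succ']
  have : ∀ k : ℕ, ((1 + k + 1 : ℕ):ℝ) = ((k + 1 + 1 : ℕ):ℝ) := fun k => by push_cast; ring
  simp only [this]
  simp [f0, f1]

lemma exp_bd1 (x : ℝ) : x * Real.exp (-x) ≤ 1 := by
  have h := Real.add_one_le_exp x
  have h3 : Real.exp x * Real.exp (-x) = 1 := by rw [← Real.exp_add]; simp
  rw [← h3]
  gcongr; linarith

lemma exp_bd2 (x : ℝ) (hx : 0 ≤ x) : x^2 * Real.exp (-x) ≤ 2 := by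
  have h := Real.quadratic_le_exp_of_nonneg hx
  have h3 : Real.exp x * Real.exp (-x) = 1 := by rw [← Real.exp_add]; simp
  calc x^2 * Real.exp (-x) ≤ 2 * Real.exp x * Real.exp (-x) := by gcongr; linarith
    _ = 2 := by rw [mul_assoc, h3, mul_one]

lemma abel_lim (f f' f'' : ℝ → ℂ) (C : ℝ) (hC : 0 ≤ C) (f0 : f 0 = 0) (f1 : f 1 = 0)
    (h1 : ∀ u : ℝ, 1 ≤ u → HasDerivAt f (f' u) u) (h2 : ∀ u : ℝ, 1 ≤ u → HasDerivAt f' (f'' u) u)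
    (h3 : ContinuousOn f'' (Set.Ici 1))
    (b0 : ∀ u : ℝ, 1 ≤ u → ‖f u‖ ≤ C * (u^2 * u ^ (-(3/2:ℝ))))
    (b1 : ∀ u : ℝ, 1 ≤ u → ‖f' u‖ ≤ C * (u * u ^ (-(3/2:ℝ))))
    (b2 : ∀ u : ℝ, 1 ≤ u → ‖f'' u‖ ≤ C * u ^ (-(3/2:ℝ)))
    (K : ℂ) (hK : Tendsto (fun n : ℕ => ∑ k ∈ Finset.range (n+2), f (k:ℝ) - 1/2 * f ((1 + n : ℕ):ℝ)
      - ∫ u in (1:ℝ)..((1 + n : ℕ):ℝ), f u) atTop (𝓝 K))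
    (y : ℂ) (hy : 0 < y.re)
    (hs : ∀ v : ℝ, 0 < v → Summable fun k : ℕ => f (k:ℝ) * Complex.exp (-(y * v * k)))
    (hi : ∀ v : ℝ, 0 < v → IntegrableOn (fun u : ℝ => f u * Complex.exp (-(y * v * u))) (Set.Ioi 1)) :
    Tendsto (fun v : ℝ => ∑' k : ℕ, f (k:ℝ) * Complex.exp (-(y * v * k)) -
      ∫ u in Set.Ioi (1:ℝ), f u * Complex.exp (-(y * v * u))) (𝓝[>] 0) (𝓝 K) := by
  set p : ℝ → ℝ := fun u => u ^ (-(3/2:ℝ)) with hp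
  have hpint : IntegrableOn p (Set.Ioi 1) := integrableOn_Ioi_rpow_of_lt (by norm_num) one_pos
  set R := ‖y‖ / y.re with hR
  have hR0 : 0 ≤ R := by positivity
  have hyR : ‖y‖ = R * y.re := by rw [hR]; field_simp
  let H : ℝ → ℝ → ℂ := fun v u => (f'' u - 2 * (y * v) * f' u + (y * v)^2 * f u) * Complex.exp (-(y * v * u))
  have hHc : ∀ v, ContinuousOn (H v) (Set.Ici 1) := by
    intro v
    have c0 : ContinuousOn f (Set.Ici 1) := fun u hu => (h1 u hu).continuousAt.continuousWithinAt
    have c1 : ContinuousOn f' (Set.Ici 1) := fun u hu => (h2 u hu).continuousAt.continuousWithinAt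
    apply ContinuousOn.mul
    · exact (h3.sub (continuousOn_const.mul c1)).add (continuousOn_const.mul c0)
    · exact Continuous.continuousOn (by fun_prop)
  have hHb : ∀ v : ℝ, 0 < v → ∀ u : ℝ, 1 ≤ u → ‖H v u‖ ≤ C * (1 + 2 * R + 2 * R^2) * p u := by
    intro v hv u hu
    have hu0 : 0 < u := by linarith
    have hp0 : 0 ≤ p u := Real.rpow_nonneg hu0.le _
    set x := y.re * v * u with hx
    have hx0 : 0 ≤ x := by positivity
    have en : ‖Complex.exp (-(y * v * u))‖ = Real.exp (-x) := by
      rw [Complex.norm_exp]; simp [hx]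
    have e1 : Real.exp (-x) ≤ 1 := by simpa using hx0
    have nyv : ‖y * (v:ℂ)‖ = R * y.re * v := by rw [norm_mul, hyR, Complex.norm_real, Real.norm_of_nonneg hv.le]
    calc ‖H v u‖ ≤ (‖f'' u‖ + 2 * ‖y * (v:ℂ)‖ * ‖f' u‖ + ‖y * (v:ℂ)‖^2 * ‖f u‖) * Real.exp (-x) := by
          simp only [H]
          rw [norm_mul, en]
          gcongr
          refine (norm_add_le _ _).trans ?_
          refine add_le_add ((norm_sub_le _ _).trans ?_) ?_
          · rw [norm_mul, norm_mul]; simp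
          · rw [norm_mul, norm_pow]
      _ ≤ (C * p u + 2 * (R * y.re * v) * (C * (u * p u)) + (R * y.re * v)^2 * (C * (u^2 * p u))) * Real.exp (-x) := by
          rw [nyv]
          have := b0 u hu
          have := b1 u hu
          have := b2 u hu
          gcongr
      _ = C * p u * (Real.exp (-x) + 2 * R * (x * Real.exp (-x)) + R^2 * (x^2 * Real.exp (-x))) := by rw [hx]; ring
      _ ≤ C * p u * (1 + 2 * R * 1 + R^2 * 2) := by
          have := exp_bd1 x
          have := exp_bd2 x hx0
          gcongr
      _ = _ := by ring
  have hHi : ∀ v : ℝ, 0 < v → IntegrableOn (H v) (Set.Ioi 1) := by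
    intro v hv
    refine Integrable.mono' (hpint.const_mul (C * (1 + 2 * R + 2 * R^2)))
      (((hHc v).mono Set.Ioi_subset_Ici_self).aestronglyMeasurable measurableSet_Ioi) ?_
    exact (ae_restrict_iff' measurableSet_Ioi).2 (Eventually.of_forall fun u hu => hHb v hv u (le_of_lt hu))
  have hfi : IntegrableOn f'' (Set.Ioi 1) := by
    refine Integrable.mono' (hpint.const_mul C)
      ((h3.mono Set.Ioi_subset_Ici_self).aestronglyMeasurable measurableSet_Ioi) ?_
    exact (ae_restrict_iff' measurableSet_Ioi).2 (Eventually.of_forall fun u hu => b2 u (le_of_lt hu))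
  have KK : K = ∫ u in Set.Ioi (1:ℝ), (trapW u : ℂ) * f'' u := by
    have := trap_tendsto f f' f'' 1 (by simpa using h1) (by simpa using h2) (by simpa using h3) (by simpa using hfi)
    simp only [sum_shift f f0 f1, Nat.cast_one] at this
    exact tendsto_nhds_unique hK this
  have hmain : ∀ v : ℝ, 0 < v → ∑' k : ℕ, f (k:ℝ) * Complex.exp (-(y * v * k)) -
      ∫ u in Set.Ioi (1:ℝ), f u * Complex.exp (-(y * v * u)) = ∫ u in Set.Ioi (1:ℝ), (trapW u : ℂ) * H v u := by
    intro v hv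
    have hde : ∀ u : ℝ, HasDerivAt (fun u : ℝ => Complex.exp (-(y * v * u))) (-(y * v) * Complex.exp (-(y * v * u))) u := by
      intro u
      have := ((hd_line (y * v) u).fun_neg).cexp
      refine this.congr_deriv ?_
      ring
    have T := trap_tendsto (fun u : ℝ => f u * Complex.exp (-(y * v * u)))
      (fun u : ℝ => (f' u - (y * v) * f u) * Complex.exp (-(y * v * u))) (H v) 1 ?_ ?_ (by simpa using hHc v) (by simpa using hHi v hv)
    · have sf := sum_shift (fun u : ℝ => f u * Complex.exp (-(y * v * u))) (by simp [f0]) (by simp [f1])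
      simp only [Nat.cast_one] at T
      simp only [sf] at T
      refine tendsto_nhds_unique ?_ T
      have t1 := (hs v hv).hasSum.tendsto_sum_nat.comp (tendsto_add_atTop_nat 2)
      have t2 := ((hs v hv).tendsto_atTop_zero.comp (tendsto_add_atTop_nat 1)).const_mul (1/2:ℂ)
      have t3 := intervalIntegral_tendsto_integral_Ioi (1:ℝ) (hi v hv)
        (tendsto_natCast_atTop_atTop.comp (tendsto_add_atTop_nat 1))
      have := (t1.sub t2).sub t3
      simp only [mul_zero, sub_zero] at this
      refine this.congr fun n => ?_
      simp [Function.comp, add_comm 1 n]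
    · intro u hu
      have hu' : 1 ≤ u := by simpa using hu
      refine ((h1 u hu').mul (hde u)).congr_deriv ?_
      ring
    · intro u hu
      have hu' : 1 ≤ u := by simpa using hu
      refine (((h2 u hu').fun_sub ((h1 u hu').const_mul (y * v))).fun_mul (hde u)).congr_deriv ?_
      simp only [H]
      ring
  have hlim : Tendsto (fun v : ℝ => ∫ u in Set.Ioi (1:ℝ), (trapW u : ℂ) * H v u) (𝓝[>] 0) (𝓝 K) := by
    rw [KK]
    refine tendsto_integral_filter_of_dominated_convergence (fun u => C * (1 + 2 * R + 2 * R^2) * p u) ?_ ?_ (hpint.const_mul _) ?_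
    · refine Eventually.of_forall fun v => ?_
      exact (Complex.measurable_ofReal.comp trapW_measurable).aestronglyMeasurable.mul
        (((hHc v).mono Set.Ioi_subset_Ici_self).aestronglyMeasurable measurableSet_Ioi)
    · filter_upwards [self_mem_nhdsWithin] with v hv
      exact (ae_restrict_iff' measurableSet_Ioi).2 (Eventually.of_forall fun u hu =>
        (trapW_norm_mul_le u _).trans (hHb v hv u (le_of_lt hu)))
    · refine Eventually.of_forall fun u => ?_
      have hc : Continuous fun v : ℝ => (trapW u : ℂ) * H v u := by
        simp only [H]; fun_prop
      have := (hc.tendsto 0).mono_left (nhdsWithin_le_nhds (s := Set.Ioi 0))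
      simpa [H] using this
  refine hlim.congr' ?_
  filter_upwards [self_mem_nhdsWithin] with v hv using (hmain v hv).symm

lemma small_int (w : ℝ → ℂ) (hw : IntegrableOn w (Set.Ioc 0 1)) (y : ℂ) (hy : 0 < y.re) :
    Tendsto (fun v : ℝ => ∫ u in Set.Ioc (0:ℝ) 1, w u * Complex.exp (-(y * v * u))) (𝓝[>] 0)
      (𝓝 (∫ u in Set.Ioc (0:ℝ) 1, w u)) := by
  refine tendsto_integral_filter_of_dominated_convergence (fun u => ‖w u‖) ?_ ?_ hw.norm ?_
  · refine Eventually.of_forall fun v => hw.aestronglyMeasurable.mul (Continuous.aestronglyMeasurable (by fun_prop))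
  · filter_upwards [self_mem_nhdsWithin] with v hv
    refine (ae_restrict_iff' measurableSet_Ioc).2 (Eventually.of_forall fun u hu => ?_)
    rw [norm_mul]
    refine mul_le_of_le_one_right (norm_nonneg _) ?_
    rw [Complex.norm_exp]
    have hv' : 0 < v := hv
    have : 0 ≤ y.re * v * u := by have := hu.1; positivity
    simpa using this
  · refine Eventually.of_forall fun u => ?_
    have hc : Continuous fun v : ℝ => w u * Complex.exp (-(y * v * u)) := by fun_prop
    have := (hc.tendsto 0).mono_left (nhdsWithin_le_nhds (s := Set.Ioi 0))
    simpa using this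


lemma q_facts (u : ℝ) (hu : 1 ≤ u) : 0 < u ^ (-(3/2:ℝ)) ∧ 1 / u^2 ≤ u ^ (-(3/2:ℝ)) ∧ 1 ≤ u^2 * u ^ (-(3/2:ℝ)) ∧
    Real.log u ≤ 2 * (u^2 * u ^ (-(3/2:ℝ))) := by
  have h0 : 0 < u := by linarith
  have e : u^2 * u ^ (-(3/2:ℝ)) = u ^ (1/2:ℝ) := by
    rw [← Real.rpow_natCast, ← Real.rpow_add h0]; norm_num
  have h1 : 1 ≤ u^2 * u ^ (-(3/2:ℝ)) := by
    rw [e]; exact Real.one_le_rpow hu (by norm_num)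
  refine ⟨by positivity, ?_, h1, ?_⟩
  · rw [div_le_iff₀ (by positivity), mul_comm]; exact h1
  · rw [e]
    have := Real.log_le_rpow_div h0.le (ε := 1/2) (by norm_num)
    linarith

lemma hd_rlog (u : ℝ) (hu : 1 ≤ u) : HasDerivAt (fun u : ℝ => (Real.log u : ℂ)) (1 / (u:ℂ)) u := by
  have := (Real.hasDerivAt_log (by linarith : u ≠ 0)).ofReal_comp
  simpa using this

lemma hd_rinv (u : ℝ) (hu : 1 ≤ u) : HasDerivAt (fun u : ℝ => 1 / (u:ℂ)) (-1 / (u:ℂ)^2) u := by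
  have h0 : (u:ℂ) ≠ 0 := by exact_mod_cast (by linarith : u ≠ 0)
  have := (hasDerivAt_const u (1:ℂ)).fun_div (hd_line 1 u |>.congr_of_eventuallyEq (Eventually.of_forall fun v => (one_mul (v:ℂ)).symm)) h0
  refine this.congr_deriv ?_
  simp

lemma cont_rlog : ContinuousOn (fun u : ℝ => (Real.log u : ℂ)) (Set.Ici 1) :=
  fun u hu => (hd_rlog u hu).continuousAt.continuousWithinAt

lemma ne_of_Ici (u : ℝ) (hu : u ∈ Set.Ici (1:ℝ)) (n : ℕ) : (u:ℂ)^n ≠ 0 := by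
  have : (1:ℝ) ≤ u := hu
  exact pow_ne_zero _ (by exact_mod_cast (by linarith : u ≠ 0))

lemma log_fact (n : ℕ) : ∑ k ∈ Finset.range (n+1), Real.log (k:ℝ) = Real.log (n.factorial) := by
  induction n with
  | zero => simp
  | succ n ih =>
    rw [Finset.sum_range_succ, ih, Nat.factorial_succ]
    push_cast
    rw [Real.log_mul (by positivity) (by positivity), add_comm]

lemma stirling_lim : Tendsto (fun n : ℕ => ∑ k ∈ Finset.range (n+2), Real.log (k:ℝ) - 1/2 * Real.log ((1 + n : ℕ):ℝ)
      - ∫ u in (1:ℝ)..((1 + n : ℕ):ℝ), Real.log u) atTop (𝓝 (1/2 * Real.log (2 * Real.pi) - 1)) := by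
  have h1 := (Stirling.tendsto_stirlingSeq_sqrt_pi.log (by positivity)).comp (tendsto_add_atTop_nat 1)
  have h2 := h1.add_const (1/2 * Real.log 2 - 1)
  have e : Real.log √Real.pi + (1/2 * Real.log 2 - 1) = 1/2 * Real.log (2 * Real.pi) - 1 := by
    rw [Real.log_sqrt Real.pi_pos.le, Real.log_mul (by norm_num) Real.pi_pos.ne']; ring
  rw [e] at h2
  refine h2.congr fun n => ?_
  simp only [Function.comp]
  rw [Stirling.log_stirlingSeq_formula, log_fact (n+1), integral_log]
  have : (0:ℝ) < ((n+1 : ℕ):ℝ) := by positivity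
  rw [Real.log_mul (by norm_num) this.ne', Real.log_div this.ne' (Real.exp_pos 1).ne', Real.log_exp, add_comm 1 n]
  simp
  ring

lemma log_abel (y : ℂ) (hy : 0 < y.re) :
    Tendsto (fun v : ℝ => ∑' k : ℕ, (Real.log (k:ℝ) : ℂ) * Complex.exp (-(y * v * k)) -
      ∫ u in Set.Ioi (1:ℝ), (Real.log u : ℂ) * Complex.exp (-(y * v * u))) (𝓝[>] 0) (𝓝 ((1/2 * Real.log (2 * Real.pi) - 1 : ℝ):ℂ)) := by
  refine abel_lim (fun u => (Real.log u : ℂ)) (fun u => 1 / (u:ℂ)) (fun u => -1 / (u:ℂ)^2) 2 (by norm_num) (by simp) (by simp)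
    hd_rlog hd_rinv ?_ ?_ ?_ ?_ _ ?_ y hy ?_ ?_
  · exact continuousOn_const.div (by fun_prop) fun u hu => ne_of_Ici u hu 2
  · intro u hu
    rw [Complex.norm_real, Real.norm_of_nonneg (Real.log_nonneg hu)]
    exact (q_facts u hu).2.2.2
  · intro u hu
    have h := q_facts u hu
    have h0 : 0 < u := by linarith
    rw [norm_div, Complex.norm_real, Real.norm_of_nonneg h0.le, norm_one]
    have := mul_le_mul_of_nonneg_left h.2.1 h0.le
    have e : u * (1 / u^2) = 1 / u := by field_simp
    rw [e] at this
    have := mul_pos h0 h.1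
    linarith
  · intro u hu
    have h := q_facts u hu
    have h0 : 0 < u := by linarith
    rw [norm_div, norm_pow, Complex.norm_real, Real.norm_of_nonneg h0.le, norm_neg, norm_one]
    linarith [h.1, h.2.1]
  · have := (Complex.continuous_ofReal.tendsto _).comp stirling_lim
    refine this.congr fun n => ?_
    simp only [Function.comp]
    rw [intervalIntegral.integral_ofReal]
    push_cast
    rfl
  · exact fun v hv => good_log.summable y hy v hv
  · intro v hv
    exact (lap_log (y * v) (re_line y hy v hv)).1.mono_set (Set.Ioi_subset_Ioi zero_le_one)

lemma logdiv_abel (y : ℂ) (hy : 0 < y.re) :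
    Tendsto (fun v : ℝ => ∑' k : ℕ, (Real.log (k:ℝ) / (k:ℝ) : ℂ) * Complex.exp (-(y * v * k)) -
      ∫ u in Set.Ioi (1:ℝ), (Real.log u / u : ℂ) * Complex.exp (-(y * v * u))) (𝓝[>] 0) (𝓝 (gamma1:ℂ)) := by
  have hd1 : ∀ u : ℝ, 1 ≤ u → HasDerivAt (fun u : ℝ => (Real.log u / u : ℂ)) ((1 - Real.log u) / (u:ℂ)^2) u := by
    intro u hu
    have h0 : (u:ℂ) ≠ 0 := by exact_mod_cast (by linarith : u ≠ 0)
    have := (hd_rlog u hu).mul (hd_rinv u hu)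
    have e : ((fun u : ℝ => (Real.log u : ℂ)) * fun u : ℝ => 1 / (u:ℂ)) = fun u : ℝ => (Real.log u / u : ℂ) := by
      ext v; simp [div_eq_mul_inv]
    rw [e] at this
    refine this.congr_deriv ?_
    field_simp
    ring
  refine abel_lim (fun u => (Real.log u / u : ℂ)) (fun u => (1 - Real.log u) / (u:ℂ)^2) (fun u => (2 * Real.log u - 3) / (u:ℂ)^3) 7 (by norm_num) (by simp) (by simp)
    hd1 ?_ ?_ ?_ ?_ ?_ _ ?_ y hy ?_ ?_
  · intro u hu
    have h0 : (u:ℂ) ≠ 0 := by exact_mod_cast (by linarith : u ≠ 0)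
    have h2 : HasDerivAt (fun u : ℝ => (u:ℂ)^2) (2 * u) u := by
      have := (Complex.ofRealCLM.hasDerivAt (x := u)).fun_pow 2
      simpa using this
    have := ((hd_rlog u hu).const_sub 1).fun_div h2 (pow_ne_zero 2 h0)
    refine this.congr_deriv ?_
    field_simp
    ring
  · refine ContinuousOn.div ?_ (by fun_prop) fun u hu => ne_of_Ici u hu 3
    exact (continuousOn_const.mul cont_rlog).sub continuousOn_const
  · intro u hu
    have h := q_facts u hu
    rw [norm_div, Complex.norm_real, Complex.norm_real, Real.norm_of_nonneg (Real.log_nonneg hu), Real.norm_of_nonneg (by linarith)]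
    refine (div_le_self (Real.log_nonneg hu) hu).trans ?_
    linarith [h.2.2.1, h.2.2.2]
  · intro u hu
    have h := q_facts u hu
    have h0 : 0 < u := by linarith
    rw [norm_div, norm_pow, Complex.norm_real, Real.norm_of_nonneg h0.le, div_le_iff₀ (by positivity)]
    have n1 : ‖(1:ℂ) - Real.log u‖ ≤ 1 + Real.log u := by
      refine (norm_sub_le _ _).trans ?_
      rw [Complex.norm_real, Real.norm_of_nonneg (Real.log_nonneg hu), norm_one]
    have : u^2 * u ^ (-(3/2:ℝ)) ≤ u * (u^2 * u ^ (-(3/2:ℝ))) := le_mul_of_one_le_left (by have := h.1; positivity) hu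
    nlinarith [h.2.2.1, h.2.2.2]
  · intro u hu
    have h := q_facts u hu
    have h0 : 0 < u := by linarith
    rw [norm_div, norm_pow, Complex.norm_real, Real.norm_of_nonneg h0.le, div_le_iff₀ (by positivity)]
    have n1 : ‖(2:ℂ) * Real.log u - 3‖ ≤ 2 * Real.log u + 3 := by
      refine (norm_sub_le _ _).trans ?_
      rw [norm_mul, Complex.norm_real, Real.norm_of_nonneg (Real.log_nonneg hu)]
      simp
    have : u^2 * u ^ (-(3/2:ℝ)) ≤ u * (u^2 * u ^ (-(3/2:ℝ))) := le_mul_of_one_le_left (by have := h.1; positivity) hu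
    nlinarith [h.2.2.1, h.2.2.2]
  · have t1 := gamma1_tendsto.comp (tendsto_add_atTop_nat 1)
    have t2 := (logdiv_nat_tendsto.comp (tendsto_add_atTop_nat 1)).const_mul (1/2:ℂ)
    have t3 := t1.sub t2
    rw [mul_zero, sub_zero] at t3
    refine t3.congr fun n => ?_
    simp only [Function.comp]
    have hIntg : ∫ u in (1:ℝ)..((1 + n : ℕ):ℝ), (Real.log u / u : ℂ) = 1/2 * (Real.log ((1 + n : ℕ):ℝ) : ℂ)^2 := by
      have hle : (1:ℝ) ≤ ((1 + n : ℕ):ℝ) := by push_cast; linarith [Nat.cast_nonneg (α := ℝ) n]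
      rw [intervalIntegral.integral_eq_sub_of_hasDerivAt (f := fun u : ℝ => 1/2 * (Real.log u : ℂ)^2)]
      · simp
      · intro x hx
        rw [Set.uIcc_of_le hle] at hx
        have := ((hd_rlog x hx.1).fun_pow 2).const_mul (1/2:ℂ)
        refine this.congr_deriv ?_
        simp; ring
      · apply ContinuousOn.intervalIntegrable
        rw [Set.uIcc_of_le hle]
        exact fun x hx => (hd1 x hx.1).continuousAt.continuousWithinAt
    rw [hIntg, Finset.sum_range_succ' _ (n+1)]
    simp only [Complex.ofReal_log (Nat.cast_nonneg _)]
    simp only [add_comm 1 n]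
    push_cast
    simp
    ring
  · intro v hv
    simpa using good_logdiv.summable y hy v hv
  · intro v hv
    have hh := (lap_log (y * v) (re_line y hy v hv)).1.mono_set (Set.Ioi_subset_Ioi zero_le_one)
    refine Integrable.mono hh ?_ ?_
    · refine ContinuousOn.aestronglyMeasurable ?_ measurableSet_Ioi
      refine ContinuousOn.mul ?_ (Continuous.continuousOn (by fun_prop))
      exact fun x hx => (hd1 x (le_of_lt hx)).continuousAt.continuousWithinAt
    · refine (ae_restrict_iff' measurableSet_Ioi).2 (Eventually.of_forall fun u hu => ?_)
      have hu' : 1 < u := hu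
      rw [norm_mul, norm_mul, norm_div]
      gcongr
      rw [Complex.norm_real u, Real.norm_of_nonneg (by linarith)]
      exact div_le_self (norm_nonneg _) hu'.le


lemma split_int (F : ℝ → ℂ) (hF : IntegrableOn F (Set.Ioi 0)) :
    ∫ u in Set.Ioi (0:ℝ), F u = (∫ u in Set.Ioc (0:ℝ) 1, F u) + ∫ u in Set.Ioi (1:ℝ), F u := by
  rw [← setIntegral_union (Set.Ioc_disjoint_Ioi le_rfl) measurableSet_Ioi
    (hF.mono_set Set.Ioc_subset_Ioi_self) (hF.mono_set (Set.Ioi_subset_Ioi zero_le_one)),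
    Set.Ioc_union_Ioi_eq_Ioi zero_le_one]

lemma int_of_lap (w : ℝ → ℂ) (hw : IntegrableOn (fun u : ℝ => w u * Complex.exp (-((1:ℂ) * u))) (Set.Ioi 0)) :
    IntegrableOn w (Set.Ioc 0 1) := by
  have h1 := hw.mono_set (show Set.Ioc (0:ℝ) 1 ⊆ Set.Ioi 0 from Set.Ioc_subset_Ioi_self)
  have h2 : AEStronglyMeasurable (fun u : ℝ => Complex.exp (u : ℂ)) (volume.restrict (Set.Ioc (0:ℝ) 1)) :=
    Continuous.aestronglyMeasurable (by fun_prop)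
  have h3 := Integrable.mul_bdd (c := Real.exp 1) h1 h2 ((ae_restrict_iff' measurableSet_Ioc).2 (Eventually.of_forall fun u hu => by
    rw [Complex.norm_exp]; simpa using hu.2))
  refine h3.congr (Eventually.of_forall fun u => ?_)
  simp only []
  rw [mul_assoc, ← Complex.exp_add]
  simp

lemma Psi_lim (y : ℂ) (hy : 0 < y.re) :
    Tendsto (PsiF y) (𝓝[>] 0) (𝓝 (1/2 * (Real.log (2 * Real.pi) : ℂ))) := by
  have t1 := log_abel y hy
  have hi := int_of_lap _ (lap_log 1 (by simp)).1
  have t2 := small_int _ hi y hy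
  have e : ∫ u in Set.Ioc (0:ℝ) 1, (Real.log u : ℂ) = -1 := by
    rw [← intervalIntegral.integral_of_le zero_le_one, intervalIntegral.integral_ofReal, integral_log]
    simp
  rw [e] at t2
  have t3 := t1.sub t2
  have e2 : (((1/2 * Real.log (2 * Real.pi) - 1 : ℝ)):ℂ) - -1 = 1/2 * (Real.log (2 * Real.pi) : ℂ) := by push_cast; ring
  rw [e2] at t3
  refine t3.congr' ?_
  filter_upwards [self_mem_nhdsWithin] with v hv
  have hl := lap_log (y * v) (re_line y hy v hv)
  have hs := split_int _ hl.1
  rw [hl.2] at hs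
  rw [PsiF]
  linear_combination hs

lemma logdiv_int (c : ℂ) (hc : 0 < c.re)
    (hi : IntegrableOn (fun u : ℝ => (Real.log u / u : ℂ) * Complex.exp (-(c * u))) (Set.Ioi 1)) :
    ∫ u in Set.Ioi (1:ℝ), (Real.log u / u : ℂ) * Complex.exp (-(c * u)) =
      (c/2) * ∫ u in Set.Ioi (1:ℝ), ((Real.log u)^2 : ℂ) * Complex.exp (-(c * u)) := by
  have hi2 := (lap_log2 c hc).1.mono_set (Set.Ioi_subset_Ioi zero_le_one)
  have hd : ∀ u : ℝ, 1 ≤ u → HasDerivAt (fun u : ℝ => 1/2 * (Real.log u : ℂ)^2 * Complex.exp (-(c * u)))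
      ((Real.log u / u : ℂ) * Complex.exp (-(c * u)) - (c/2) * (((Real.log u)^2 : ℂ) * Complex.exp (-(c * u)))) u := by
    intro u hu
    have := (((hd_rlog u hu).fun_pow 2).const_mul (1/2:ℂ)).fun_mul ((hd_line c u).fun_neg).cexp
    refine this.congr_deriv ?_
    simp; ring
  have key := integral_Ioi_of_hasDerivAt_of_tendsto (m := 0) (hd 1 le_rfl).continuousAt.continuousWithinAt
    (fun u hu => hd u (le_of_lt hu)) (hi.sub (hi2.const_mul (c/2))) ?_
  · rw [integral_sub hi (hi2.const_mul (c/2)), integral_const_mul] at key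
    simp at key
    linear_combination key
  · have h1 : (fun t : ℝ => Complex.exp (-(c * t))) =O[atTop] fun x : ℝ => x ^ (-(3):ℝ) := by
      rw [← Asymptotics.isBigO_norm_left]
      simp_rw [Complex.norm_exp]
      simpa using (isLittleO_exp_neg_mul_rpow_atTop hc (-(3))).isBigO
    have h2 : (fun x : ℝ => (Real.log x : ℂ)) =O[atTop] fun x : ℝ => x ^ (1:ℝ) := by
      rw [← Asymptotics.isBigO_norm_left]
      refine Asymptotics.IsBigO.trans (Asymptotics.isBigO_of_le _ fun x => by simp) (isLittleO_log_rpow_atTop (one_pos)).isBigO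
    have h3 := ((h2.pow 2).const_mul_left (1/2)).mul h1
    refine h3.trans_tendsto ?_
    have := tendsto_rpow_neg_atTop (y := 1) one_pos
    refine this.congr' ?_
    filter_upwards [eventually_gt_atTop 0] with x hx
    rw [← Real.rpow_natCast, ← Real.rpow_mul hx.le, ← Real.rpow_add hx]
    norm_num

lemma PsiA_lim (y : ℂ) (hy : 0 < y.re) :
    Tendsto (PsiA y) (𝓝[>] 0) (𝓝 (-(gamma1:ℂ) - (eulerGamma:ℂ)^2/2 - Real.pi^2/12)) := by
  have t1 := logdiv_abel y hy
  have hi := int_of_lap _ (lap_log2 1 (by simp)).1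
  have t2 := small_int _ hi y hy
  have t0 : Tendsto (fun v : ℝ => y * v / 2) (𝓝[>] 0) (𝓝 0) := by
    have hc : Continuous fun v : ℝ => y * (v:ℂ) / 2 := by fun_prop
    simpa using (hc.tendsto 0).mono_left (nhdsWithin_le_nhds (s := Set.Ioi 0))
  have t3 := (t1.neg.sub_const (((eulerGamma:ℂ)^2 + Real.pi^2/6)/2)).add (t0.mul t2)
  have e : -(gamma1:ℂ) - ((eulerGamma:ℂ)^2 + Real.pi^2/6)/2 + 0 * (∫ u in Set.Ioc (0:ℝ) 1, ((Real.log u)^2 : ℂ)) =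
    -(gamma1:ℂ) - (eulerGamma:ℂ)^2/2 - Real.pi^2/12 := by ring
  rw [e] at t3
  refine t3.congr' ?_
  filter_upwards [self_mem_nhdsWithin] with v hv
  have hv' : 0 < v := hv
  have hc := re_line y hy v hv'
  have hy0 := re_pos_ne y hy
  have hv0 : (v:ℂ) ≠ 0 := by exact_mod_cast hv'.ne'
  have hl := lap_log2 (y * v) hc
  have hs := split_int _ hl.1
  rw [hl.2] at hs
  have hIntg : IntegrableOn (fun u : ℝ => (Real.log u / u : ℂ) * Complex.exp (-(y * v * u))) (Set.Ioi 1) := by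
    have hh := (lap_log (y * v) (re_line y hy v hv)).1.mono_set (Set.Ioi_subset_Ioi zero_le_one)
    refine Integrable.mono hh ?_ ?_
    · refine ContinuousOn.aestronglyMeasurable ?_ measurableSet_Ioi
      refine ContinuousOn.mul ?_ (Continuous.continuousOn (by fun_prop))
      refine (cont_rlog.mono Set.Ioi_subset_Ici_self).div (by fun_prop) fun x hx => ?_
      simpa using ne_of_Ici x (Set.mem_Ici.2 (le_of_lt hx)) 1
    · refine (ae_restrict_iff' measurableSet_Ioi).2 (Eventually.of_forall fun u hu => ?_)
      have hu' : 1 < u := hu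
      rw [norm_mul, norm_mul, norm_div]
      gcongr
      rw [Complex.norm_real u, Real.norm_of_nonneg (by linarith)]
      exact div_le_self (norm_nonneg _) hu'.le
  have hq := logdiv_int (y * v) hc hIntg
  rw [PsiA]
  simp only [Complex.ofReal_natCast]
  rw [hq]
  have hs2 : y * v / 2 * (((eulerGamma : ℂ) ^ 2 + Real.pi ^ 2 / 6 + 2 * eulerGamma * Complex.log (y*v) + Complex.log (y*v) ^ 2) / (y*v)) =
    ((eulerGamma : ℂ) ^ 2 + Real.pi ^ 2 / 6 + 2 * eulerGamma * Complex.log (y*v) + Complex.log (y*v) ^ 2)/2 := by field_simp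
  linear_combination (-(y * v / 2)) * hs + hs2


lemma trap_delta (P Pd S A : ℝ → ℂ) (LP LA : ℂ) (hP : ∀ v, 0 < v → HasDerivAt P (Pd v) v)
    (hPd : ∀ v, 0 < v → HasDerivAt Pd (S v) v) (hA : ∀ v, 0 < v → HasDerivAt A (P v) v)
    (hS : ContinuousOn S (Set.Ici 0)) (tP : Tendsto P (𝓝[>] 0) (𝓝 LP))
    (tA : Tendsto A (𝓝[>] 0) (𝓝 LA)) (N : ℕ) (hN : 1 ≤ N) :
    ∫ u in (0:ℝ)..(N:ℝ), (trapW u : ℂ) * S u =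
      (1/2) * LP + ∑ k ∈ Finset.range N, P ((k:ℝ)+1) - (1/2) * P N - (A N - LA) := by
  have hN' : (0:ℝ) < N := by exact_mod_cast hN
  have id : ∀ δ : ℝ, 0 < δ → ∫ u in (0:ℝ)..(N:ℝ), (trapW u : ℂ) * S (u + δ) =
      (1/2) * P δ + ∑ k ∈ Finset.range N, P ((k:ℝ)+1+δ) - (1/2) * P (N + δ) - (A (N+δ) - A δ) := by
    intro δ hδ
    have h := trap_sum (fun v => P (v + δ)) (fun v => Pd (v+δ)) (fun v => S (v+δ)) 0
      (fun u hu => (hP (u+δ) (by push_cast at hu; linarith)).comp_add_const u δ)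
      (fun u hu => (hPd (u+δ) (by push_cast at hu; linarith)).comp_add_const u δ)
      (hS.comp (by fun_prop) (fun u hu => by
        simp only [Set.mem_Ici, Nat.cast_zero] at hu ⊢; linarith)) N
    have hf := trap_sum_form (fun v => P (v+δ)) 0 N
    beta_reduce at hf
    rw [hf] at h
    have hi : ∫ u in (0:ℝ)..(N:ℝ), P (u + δ) = A (N+δ) - A (0+δ) := by
      apply intervalIntegral.integral_eq_sub_of_hasDerivAt (f := fun u => A (u+δ))
      · intro u hu
        rw [Set.uIcc_of_le hN'.le] at hu
        exact (hA (u+δ) (by linarith [hu.1])).comp_add_const u δ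
      · apply ContinuousOn.intervalIntegrable
        intro u hu
        rw [Set.uIcc_of_le hN'.le] at hu
        exact (((hP (u+δ) (by linarith [hu.1])).comp_add_const u δ).continuousAt).continuousWithinAt
    simp only [Nat.cast_zero, zero_add, Nat.cast_add, Nat.cast_one] at h hi
    rw [h, hi]
  have ev : ∀ᶠ δ : ℝ in 𝓝[>] 0, 0 < δ := eventually_mem_nhdsWithin
  have sh : ∀ x : ℝ, 0 < x → ∀ G G' : ℝ → ℂ, (∀ v, 0 < v → HasDerivAt G (G' v) v) →
      Tendsto (fun δ : ℝ => G (x + δ)) (𝓝[>] 0) (𝓝 (G x)) := by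
    intro x hx G G' hG
    have : Tendsto (fun δ : ℝ => x + δ) (𝓝[>] 0) (𝓝 x) := by
      have : Tendsto (fun δ : ℝ => x + δ) (𝓝 0) (𝓝 (x + 0)) := by
        apply Continuous.tendsto; fun_prop
      rw [add_zero] at this
      exact this.mono_left nhdsWithin_le_nhds
    exact (hG x hx).continuousAt.tendsto.comp this
  have t1 : Tendsto (fun δ : ℝ => (1/2) * P δ + ∑ k ∈ Finset.range N, P ((k:ℝ)+1+δ) - (1/2) * P (N + δ) - (A (N+δ) - A δ))
      (𝓝[>] 0) (𝓝 ((1/2) * LP + ∑ k ∈ Finset.range N, P ((k:ℝ)+1) - (1/2) * P N - (A N - LA))) := by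
    refine (((tP.const_mul _).add (tendsto_finsetSum _ fun k _ => sh _ (by positivity) P Pd hP)).sub
      ((sh N hN' P Pd hP).const_mul _)).sub ((sh N hN' A P hA).sub tA)
  obtain ⟨C, hC⟩ := (isCompact_Icc (a := (0:ℝ)) (b := N+1)).exists_bound_of_continuousOn
    (hS.mono Set.Icc_subset_Ici_self)
  have t2 : Tendsto (fun δ : ℝ => ∫ u in (0:ℝ)..(N:ℝ), (trapW u : ℂ) * S (u + δ)) (𝓝[>] 0)
      (𝓝 (∫ u in (0:ℝ)..(N:ℝ), (trapW u : ℂ) * S u)) := by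
    apply intervalIntegral.tendsto_integral_filter_of_dominated_convergence (fun _ => C)
    · filter_upwards [ev] with δ hδ
      apply AEStronglyMeasurable.mul
      · exact (Complex.measurable_ofReal.comp trapW_measurable).aestronglyMeasurable
      · rw [Set.uIoc_of_le hN'.le]
        apply ContinuousOn.aestronglyMeasurable _ measurableSet_Ioc
        exact hS.comp (by fun_prop) (fun u hu => by
          simp only [Set.mem_Ici]; linarith [hu.1])
    · have : ∀ᶠ δ : ℝ in 𝓝[>] 0, δ < 1 := 
        (eventually_lt_nhds (zero_lt_one)).filter_mono nhdsWithin_le_nhds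
      filter_upwards [ev, this] with δ hδ h1
      refine Eventually.of_forall fun u hu => ?_
      rw [Set.uIoc_of_le hN'.le] at hu
      exact (trapW_norm_mul_le _ _).trans (hC _ ⟨by linarith [hu.1], by linarith [hu.2]⟩)
    · exact intervalIntegrable_const
    · refine Eventually.of_forall fun u hu => ?_
      rw [Set.uIoc_of_le hN'.le] at hu
      apply Tendsto.const_mul
      have hc : ContinuousAt S u := hS.continuousAt (Ici_mem_nhds hu.1)
      have : Tendsto (fun δ : ℝ => u + δ) (𝓝[>] 0) (𝓝 u) := by
        have : Tendsto (fun δ : ℝ => u + δ) (𝓝 0) (𝓝 (u + 0)) := by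
          apply Continuous.tendsto; fun_prop
        rw [add_zero] at this
        exact this.mono_left nhdsWithin_le_nhds
      exact hc.tendsto.comp this
  refine tendsto_nhds_unique t2 (t1.congr' ?_)
  filter_upwards [ev] with δ hδ
  exact (id δ hδ).symm

lemma trap_Psi (y : ℂ) (hy : 0 < y.re) (N : ℕ) (hN : 1 ≤ N) :
    ∫ u in (0:ℝ)..(N:ℝ), (trapW u : ℂ) * (-(1/y) * ∑' n, Dn y n u) =
      (1/2) * (1/2 * (Real.log (2 * Real.pi) : ℂ)) + ∑ k ∈ Finset.range N, PsiF y ((k:ℝ)+1)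
       - (1/2) * PsiF y N - ((1/y) * PsiA y N
         - (1/y) * (-(gamma1:ℂ) - (eulerGamma:ℂ)^2/2 - Real.pi^2/12)) := by
  have hy0 := re_pos_ne y hy
  apply trap_delta (PsiF y) (PsiD y) _ (fun v => (1/y) * PsiA y v) _ _ (fun v hv => PsiF_hd y hy v hv)
    (fun v hv => PsiD_hd y hy v hv)
  · intro v hv
    have := (PsiA_hd y hy v hv).const_mul (1/y)
    have e : (1/y) * (y * PsiF y v) = PsiF y v := by field_simp
    rwa [e] at this
  · exact continuousOn_const.mul (rhs_main y hy).2.2.2.1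
  · exact Psi_lim y hy
  · exact (PsiA_lim y hy).const_mul _
  · exact hN


lemma ser_nat_zero (b : ℕ → ℂ) (hb : GoodSeq b) (h0 : b 0 = 0) (y : ℂ) (hy : 0 < y.re) :
    Tendsto (fun N : ℕ => ∑' j : ℕ, b j * Complex.exp (-(y * ((N:ℝ):ℂ) * j))) atTop (𝓝 0) := by
  have h := tendsto_tsum_of_dominated_convergence (𝓕 := atTop)
    (f := fun (N : ℕ) (j : ℕ) => b j * Complex.exp (-(y * ((N:ℝ):ℂ) * j))) (g := fun _ => 0)
    (bound := fun j : ℕ => ‖b j‖ * Real.exp (-(y.re * j))) (hb y.re hy) ?_ ?_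
  · simpa using h
  · intro j
    rcases Nat.eq_zero_or_pos j with rfl | hj
    · simp [h0]
    · rw [tendsto_zero_iff_norm_tendsto_zero]
      simp only [GoodSeq.norm_term]
      have hj' : (0:ℝ) < j := by exact_mod_cast hj
      have : Tendsto (fun N : ℕ => Real.exp (-(y.re * (N:ℝ) * j))) atTop (𝓝 0) := by
        apply Real.tendsto_exp_neg_atTop_nhds_zero.comp
        exact (tendsto_natCast_atTop_atTop.const_mul_atTop hy).atTop_mul_const hj'
      simpa using this.const_mul ‖b j‖
  · filter_upwards [eventually_ge_atTop 1] with N hN j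
    rw [GoodSeq.norm_term]
    have hN' : (1:ℝ) ≤ N := by exact_mod_cast hN
    gcongr
    nlinarith

lemma geo_fin_lim (r : ℂ) (hr : ‖r‖ < 1) :
    Tendsto (fun N : ℕ => ∑ k ∈ Finset.range N, r ^ (k+1)) atTop (𝓝 (r / (1 - r))) := by
  have := ((hasSum_geometric_of_norm_lt_one hr).mul_left r).tendsto_sum_nat
  simpa only [pow_succ', div_eq_mul_inv] using this

lemma lambert_lim (y : ℂ) (hy : 0 < y.re) :
    Tendsto (fun N : ℕ => ∑ k ∈ Finset.range N, ∑' j : ℕ, (Real.log j : ℂ) * Complex.exp (-(y * (((k:ℝ)+1 : ℝ):ℂ) * j))) atTop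
      (𝓝 (∑' n : ℕ, Complex.log ((n : ℂ) + 1) / (Complex.exp (((n : ℂ) + 1) * y) - 1))) := by
  have hq1 : Real.exp (-y.re) < 1 := by rw [Real.exp_lt_one_iff]; linarith
  have e1 : ∀ (k j : ℕ), Complex.exp (-(y * (((k:ℝ)+1 : ℝ):ℂ) * j)) = Complex.exp (-(y*j)) ^ (k+1) := by
    intro k j
    rw [← Complex.exp_nat_mul]
    congr 1; push_cast; ring
  have nr : ∀ j : ℕ, ‖Complex.exp (-(y*j))‖ = Real.exp (-(y.re * j)) := by
    intro j; rw [Complex.norm_exp]; simp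
  have nr1 : ∀ j : ℕ, 1 ≤ j → Real.exp (-(y.re * j)) ≤ Real.exp (-y.re) := by
    intro j hj
    have : (1:ℝ) ≤ j := by exact_mod_cast hj
    apply Real.exp_le_exp.2; nlinarith
  have main := tendsto_tsum_of_dominated_convergence (𝓕 := atTop)
    (f := fun (N : ℕ) (j : ℕ) => ∑ k ∈ Finset.range N, (Real.log j : ℂ) * Complex.exp (-(y*j)) ^ (k+1))
    (g := fun j : ℕ => (Real.log j : ℂ) * (Complex.exp (-(y*j)) / (1 - Complex.exp (-(y*j)))))
    (bound := fun j : ℕ => (‖(Real.log j : ℂ)‖ * Real.exp (-(y.re * j))) * (1 - Real.exp (-y.re))⁻¹)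
    ((good_log y.re hy).mul_right _) ?_ ?_
  · have hsum : Summable (fun j : ℕ => (Real.log j : ℂ) * (Complex.exp (-(y*j)) / (1 - Complex.exp (-(y*j))))) := by
      refine Summable.of_norm_bounded (((good_log y.re hy).mul_right (1 - Real.exp (-y.re))⁻¹)) fun j => ?_
      rcases Nat.eq_zero_or_pos j with rfl | hj
      · simp
      · rw [norm_mul, norm_div, nr, mul_assoc, div_eq_mul_inv]
        have : 1 - Real.exp (-y.re) ≤ ‖1 - Complex.exp (-(y*j))‖ := by
          have := norm_sub_norm_le (1:ℂ) (Complex.exp (-(y*j)))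
          rw [nr, norm_one] at this
          linarith [nr1 j hj]
        have h0 : 0 < 1 - Real.exp (-y.re) := by linarith
        gcongr
    have e2 : (∑' j : ℕ, (Real.log j : ℂ) * (Complex.exp (-(y*j)) / (1 - Complex.exp (-(y*j))))) =
        ∑' n : ℕ, Complex.log ((n : ℂ) + 1) / (Complex.exp (((n : ℂ) + 1) * y) - 1) := by
      rw [hsum.tsum_eq_zero_add]
      simp only [Nat.cast_zero, Real.log_zero, Complex.ofReal_zero, zero_mul, zero_add]
      refine tsum_congr fun n => ?_
      have hl : ((Real.log ((n+1:ℕ):ℝ) : ℝ) : ℂ) = Complex.log ((n:ℂ)+1) := by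
        rw [Complex.ofReal_log (by positivity)]; push_cast; rfl
      rw [hl, div_eq_mul_inv (Complex.log ((n:ℂ)+1))]
      congr 1
      have : Complex.exp (((n : ℂ) + 1) * y) = (Complex.exp (-(y*((n+1:ℕ):ℂ))))⁻¹ := by
        rw [← Complex.exp_neg]; congr 1; push_cast; ring
      rw [this]
      have hne := Complex.exp_ne_zero (-(y*((n+1:ℕ):ℂ)))
      set r := Complex.exp (-(y*((n+1:ℕ):ℂ))) with hr
      have hr1 : 1 - r ≠ 0 := by
        intro h
        have h1 : ‖r‖ = 1 := by rw [show r = 1 by linear_combination -h]; simp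
        rw [hr, nr] at h1
        linarith [nr1 (n+1) (by omega)]
      have : r⁻¹ - 1 = (1 - r) / r := by field_simp
      rw [this, inv_div]
    rw [e2] at main
    refine main.congr fun N => ?_
    rw [Summable.tsum_finsetSum]
    · refine Finset.sum_congr rfl fun k _ => tsum_congr fun j => ?_
      rw [e1]
    · intro k _
      have := good_log.summable y hy ((k:ℝ)+1) (by positivity)
      refine this.congr fun j => ?_
      rw [e1]
  · intro j
    simp only [← Finset.mul_sum]
    rcases Nat.eq_zero_or_pos j with rfl | hj
    · simp
    · exact (geo_fin_lim _ (by rw [nr]; linarith [nr1 j hj])).const_mul _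
  · refine Eventually.of_forall fun N j => ?_
    rw [← Finset.mul_sum, norm_mul, mul_assoc]
    rcases Nat.eq_zero_or_pos j with rfl | hj
    · simp
    gcongr
    refine (norm_sum_le _ _).trans ?_
    have hb : ∀ k ∈ Finset.range N, ‖Complex.exp (-(y*j)) ^ (k+1)‖ ≤ Real.exp (-(y.re*j)) * Real.exp (-y.re) ^ k := by
      intro k _
      rw [norm_pow, nr, pow_succ']
      gcongr
      exact Real.exp_le_exp.1 (nr1 j hj) |> neg_le_neg_iff.1
    refine (Finset.sum_le_sum hb).trans ?_
    rw [← Finset.mul_sum]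
    gcongr
    rw [← tsum_geometric_of_lt_one (Real.exp_pos _).le hq1]
    exact (summable_geometric_of_lt_one (Real.exp_pos _).le hq1).sum_le_tsum _ (fun _ _ => by positivity)


lemma log_yN (y : ℂ) (hy : 0 < y.re) (N : ℕ) (hN : 1 ≤ N) :
    Complex.log (y * ((N:ℝ):ℂ)) = Complex.log y + Complex.log (N:ℂ) := by
  have hN' : (0:ℝ) < N := by exact_mod_cast hN
  have := Complex.log_mul_ofReal (N:ℝ) hN' y (re_pos_ne y hy)
  rw [this, add_comm, Complex.ofReal_log hN'.le]; simp

lemma PsiF_zero (y : ℂ) (hy : 0 < y.re) : Tendsto (fun N : ℕ => PsiF y N) atTop (𝓝 0) := by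
  have h1 := ser_nat_zero _ good_log (by simp) y hy
  have h2 : Tendsto (fun N : ℕ => (((eulerGamma:ℂ) + Complex.log y) * (1/(N:ℂ)) + Complex.log N / N) / y) atTop (𝓝 0) := by
    have := ((inv_nat_tendsto.const_mul ((eulerGamma:ℂ) + Complex.log y)).add logdiv_nat_tendsto).div_const y
    simpa using this
  have h3 := h1.add h2
  rw [add_zero] at h3
  refine h3.congr' ?_
  filter_upwards [eventually_ge_atTop 1] with N hN
  have hN0 : (N:ℂ) ≠ 0 := by exact_mod_cast (by omega : N ≠ 0)
  have hy0 := re_pos_ne y hy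
  rw [PsiF, log_yN y hy N hN]
  congr 1
  push_cast
  field_simp
  ring

lemma main_lim (y : ℂ) (hy : 0 < y.re) :
    Tendsto (fun N : ℕ => ∑ k ∈ Finset.range N, PsiF y ((k:ℝ)+1) - (1/y) * PsiA y N) atTop
      (𝓝 ((∑' n : ℕ, Complex.log ((n : ℂ) + 1) / (Complex.exp (((n : ℂ) + 1) * y) - 1)) +
        (1/y) * ((eulerGamma:ℂ)^2 + gamma1 - (1/2) * Complex.log y ^ 2))) := by
  have hy0 := re_pos_ne y hy
  have h1 := lambert_lim y hy
  have h2 := ser_nat_zero _ good_logdiv (by simp) y hy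
  have h3 := ((harm_tendsto.const_mul ((eulerGamma:ℂ) + Complex.log y)).add gamma1_tendsto).sub_const
    ((eulerGamma:ℂ) * Complex.log y + (1/2) * Complex.log y ^ 2)
  have h4 := h1.add ((h2.add h3).const_mul (1/y))
  have e : (∑' n : ℕ, Complex.log ((n : ℂ) + 1) / (Complex.exp (((n : ℂ) + 1) * y) - 1)) +
        (1/y) * ((eulerGamma:ℂ)^2 + gamma1 - (1/2) * Complex.log y ^ 2) =
      (∑' n : ℕ, Complex.log ((n : ℂ) + 1) / (Complex.exp (((n : ℂ) + 1) * y) - 1)) +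
        (1/y) * (0 + (((eulerGamma:ℂ) + Complex.log y) * eulerGamma + gamma1 - ((eulerGamma:ℂ) * Complex.log y + (1/2) * Complex.log y ^ 2))) := by
    ring
  rw [e]
  refine h4.congr' ?_
  filter_upwards [eventually_ge_atTop 1] with N hN
  have s : ∑ k ∈ Finset.range N, PsiF y ((k:ℝ)+1) =
      ∑ k ∈ Finset.range N, ∑' j : ℕ, (Real.log j : ℂ) * Complex.exp (-(y * (((k:ℝ)+1 : ℝ):ℂ) * j)) +
      (1/y) * (((eulerGamma:ℂ) + Complex.log y) * ∑ k ∈ Finset.range N, 1/((k:ℂ)+1) +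
        ∑ k ∈ Finset.range N, Complex.log ((k:ℂ)+1)/((k:ℂ)+1)) := by
    rw [Finset.mul_sum, ← Finset.sum_add_distrib, Finset.mul_sum, ← Finset.sum_add_distrib]
    refine Finset.sum_congr rfl fun k _ => ?_
    have hl := log_yN y hy (k+1) (by omega)
    push_cast at hl
    have hk : (k:ℂ) + 1 ≠ 0 := by exact_mod_cast Nat.succ_ne_zero k
    rw [PsiF]
    congr 1
    push_cast
    rw [hl]
    field_simp
    ring
  rw [s, PsiA, log_yN y hy N hN]
  ring

lemma final_id (y : ℂ) (hy : 0 < y.re) :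
    -(1/y) * ∫ v in Set.Ioi 0, (trapW v:ℂ) * ∑' n, Dn y n v =
     (1/2) * (1/2 * (Real.log (2 * Real.pi) : ℂ)) +
     ((∑' n : ℕ, Complex.log ((n : ℂ) + 1) / (Complex.exp (((n : ℂ) + 1) * y) - 1)) +
        (1/y) * ((eulerGamma:ℂ)^2 + gamma1 - (1/2) * Complex.log y ^ 2)) - 0 +
        (1/y) * (-(gamma1:ℂ) - (eulerGamma:ℂ)^2/2 - Real.pi^2/12) := by
  have hS := (rhs_main y hy).2.2.2.2
  have hi : IntegrableOn (fun v => (trapW v:ℂ) * (-(1/y) * ∑' n, Dn y n v)) (Set.Ioi 0) := by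
    have h0 : IntegrableOn (fun v => -(1/y) * ∑' n, Dn y n v) (Set.Ioi 0) := Integrable.const_mul hS _
    refine Integrable.mono h0 ?_ (Eventually.of_forall fun v => trapW_norm_mul_le _ _)
    exact (Complex.measurable_ofReal.comp trapW_measurable).aestronglyMeasurable.mul h0.1
  have t1 := intervalIntegral_tendsto_integral_Ioi 0 hi (tendsto_natCast_atTop_atTop (R := ℝ))
  have e : ∫ v in Set.Ioi 0, (trapW v:ℂ) * (-(1/y) * ∑' n, Dn y n v) =
     -(1/y) * ∫ v in Set.Ioi 0, (trapW v:ℂ) * ∑' n, Dn y n v := by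
    rw [← integral_const_mul]
    congr 1; ext v; ring
  rw [e] at t1
  have t2 := (((main_lim y hy).const_add ((1/2) * (1/2 * (Real.log (2 * Real.pi) : ℂ)))).sub
    ((PsiF_zero y hy).const_mul (1/2))).add_const ((1/y) * (-(gamma1:ℂ) - (eulerGamma:ℂ)^2/2 - Real.pi^2/12))
  rw [mul_zero] at t2
  refine tendsto_nhds_unique t1 (t2.congr' ?_)
  filter_upwards [eventually_ge_atTop 1] with N hN
  rw [trap_Psi y hy N hN]
  ring

theorem stmt0 (y : ℂ) (hy : 0 < y.re) :
    Summable (wigTerm y) ∧ Summable (psiTerm y) ∧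
    ∑' n : ℕ, Complex.log ((n : ℂ) + 1) / (Complex.exp (((n : ℂ) + 1) * y) - 1) =
      -(1/4) * Complex.log (2 * (Real.pi : ℂ)) + (Complex.log y) ^ 2 / (2 * y)
        - (eulerGamma : ℂ) ^ 2 / (2 * y) + (Real.pi : ℂ) ^ 2 / (12 * y)
        - (2 / y) * ((eulerGamma : ℂ) + Complex.log y) * (∑' n : ℕ, wigTerm y n)
        + (1 / y) * (∑' n : ℕ, psiTerm y n) := by
  obtain ⟨h1, h2, h3, -, -⟩ := rhs_main y hy
  refine ⟨h1, h2, ?_⟩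
  have hf := final_id y hy
  have hy0 := re_pos_ne y hy
  have hl : Complex.log (2 * (Real.pi : ℂ)) = (Real.log (2 * Real.pi) : ℂ) := by
    rw [Complex.ofReal_log (by positivity)]; push_cast; rfl
  rw [hl]
  set J := ∫ v in Set.Ioi 0, (trapW v:ℂ) * ∑' n, Dn y n v
  have hJ : J = -(∑' n : ℕ, psiTerm y n - 2 * ((eulerGamma : ℂ) + Complex.log y) * (∑' n : ℕ, wigTerm y n)) := by
    rw [h3]; ring
  rw [hJ] at hf
  linear_combination -hf
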